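/- arXiv:1107.3374 — 2 statements merged into one kernel-verified Lean document; each statement's English description precedes it below -/
import Mathlib

section
/- Let m ≥ 3. Let a⁰ = (a⁰₁,…,a⁰_m) : ℝ^m → ℂ^m be a C^∞ map, regarded as the coefficients of the smooth complex vector field L₀ = Σᵢ a⁰ᵢ(x) ∂/∂xᵢ, let p₀ ∈ ℝ^m, h ∈ ℕ, and ε > 0. Then there exists a C^∞ map a : ℝ^m → ℂ^m such that sup over x ∈ ℝ^m and 0 ≤ j ≤ h of ‖iteratedFDeriv ℝ j (a − a⁰) x‖ is < ε, and such that for every open set U ⊆ ℝ^m containing p₀ and every C¹ function u : U → ℂ satisfying Σᵢ aᵢ(x) · (fderiv ℝ u x)(eᵢ) = 0 for all x ∈ U, one has fderiv ℝ u p₀ = 0. -/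
open Complex

open MeasureTheory Set Filter Topology
open scoped ContDiff

/-- A Cauchy transform is holomorphic on every open set avoided by the support of its density. -/
lemma differentiableOn_cauchyTransform {X : Type*} [MeasurableSpace X] {μ : Measure X}
    {k w : X → ℂ} (hk : Integrable k μ) (hw : Measurable w) {O : Set ℂ} (hO : IsOpen O)
    (hkO : ∀ x, k x ≠ 0 → w x ∉ O) :
    DifferentiableOn ℂ (fun ζ => ∫ x, k x * (ζ - w x)⁻¹ ∂μ) O := by
  intro ζ₀ hζ₀
  obtain ⟨r, hr, hball⟩ := Metric.isOpen_iff.1 hO ζ₀ hζ₀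
  have hdist : ∀ x, k x ≠ 0 → ∀ ζ ∈ Metric.ball ζ₀ (r / 2), r / 2 ≤ ‖ζ - w x‖ := by
    intro x hx ζ hζ
    have h1 : r ≤ dist (w x) ζ₀ := by
      by_contra! hlt
      exact hkO x hx (hball hlt)
    have h2 := Metric.mem_ball.1 hζ
    have h3 := dist_triangle (w x) ζ ζ₀
    rw [dist_comm (w x) ζ, dist_eq_norm ζ (w x)] at h3
    linarith
  have hmeas : ∀ ζ, AEStronglyMeasurable (fun x => k x * (ζ - w x)⁻¹) μ := fun ζ =>
    hk.aestronglyMeasurable.mul (by fun_prop : Measurable fun x => (ζ - w x)⁻¹).aestronglyMeasurable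
  have hbd : ∀ x, ∀ ζ ∈ Metric.ball ζ₀ (r / 2), ‖k x * (ζ - w x)⁻¹‖ ≤ ‖k x‖ * (2 / r) := by
    intro x ζ hζ
    by_cases hx : k x = 0
    · simp [hx]
    rw [norm_mul, norm_inv]
    gcongr
    rw [← inv_div]
    exact inv_anti₀ (by positivity) (hdist x hx ζ hζ)
  have hmem : ζ₀ ∈ Metric.ball ζ₀ (r / 2) := Metric.mem_ball_self (by positivity)
  refine (hasDerivAt_integral_of_dominated_loc_of_deriv_le (F := fun ζ x => k x * (ζ - w x)⁻¹)
    (F' := fun ζ x => k x * (-1 / (ζ - w x) ^ 2)) (bound := fun x => ‖k x‖ * (2 / r) ^ 2)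
    (Metric.ball_mem_nhds ζ₀ (by positivity : 0 < r / 2)) (Eventually.of_forall hmeas) ?_ ?_ ?_
    (hk.norm.mul_const _) ?_).2.differentiableAt.differentiableWithinAt
  · exact (hk.norm.mul_const (2 / r)).mono' (hmeas ζ₀)
      (Eventually.of_forall fun x => hbd x ζ₀ hmem)
  · exact hk.aestronglyMeasurable.mul
      (by fun_prop : Measurable fun x => -1 / (ζ₀ - w x) ^ 2).aestronglyMeasurable
  · refine Eventually.of_forall fun x ζ hζ => ?_
    by_cases hx : k x = 0
    · simp [hx]
    rw [norm_mul, norm_div, norm_neg, norm_one, norm_pow]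
    gcongr
    rw [one_div, ← inv_div, inv_pow]
    exact inv_anti₀ (by positivity) (pow_le_pow_left₀ (by positivity) (hdist x hx ζ hζ) 2)
  · refine Eventually.of_forall fun x ζ hζ => ?_
    by_cases hx : k x = 0
    · simpa [hx] using hasDerivAt_const ζ (0 : ℂ)
    have hne : ζ - w x ≠ 0 := by
      rw [← norm_pos_iff]
      linarith [hdist x hx ζ hζ]
    exact (((hasDerivAt_id ζ).sub_const (w x)).inv hne).const_mul (k x)

/-- The contour integral of a Cauchy transform over a circle enclosing the density. -/
lemma circleIntegral_cauchyTransform {X : Type*} [MeasurableSpace X] {μ : Measure X} [SFinite μ]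
    {k w : X → ℂ} (hk : Integrable k μ) (hw : Measurable w) {c : ℂ} {R δ : ℝ} (hR : 0 < R)
    (hδ : 0 < δ) (hkR : ∀ x, k x ≠ 0 → dist (w x) c ≤ R - δ) :
    ∮ ζ in C(c, R), ∫ x, k x * (ζ - w x)⁻¹ ∂μ = 2 * Real.pi * I * ∫ x, k x ∂μ := by
  have hpi : (0 : ℝ) ≤ 2 * Real.pi := by positivity
  have hfar : ∀ x θ, k x ≠ 0 → δ ≤ ‖circleMap c R θ - w x‖ := by
    intro x θ hx
    have h1 := hkR x hx
    have h2 : dist (circleMap c R θ) c = R := circleMap_mem_sphere c hR.le θ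
    have h3 := dist_triangle (circleMap c R θ) (w x) c
    rw [dist_eq_norm (circleMap c R θ) (w x)] at h3
    linarith
  simp only [circleIntegral, intervalIntegral.integral_of_le hpi, smul_eq_mul]
  simp_rw [← integral_const_mul]
  rw [integral_integral_swap]
  · have : ∀ x, ∫ θ in Ioc 0 (2 * Real.pi), deriv (circleMap c R) θ *
        (k x * (circleMap c R θ - w x)⁻¹) = 2 * Real.pi * I * k x := by
      intro x
      by_cases hx : k x = 0
      · simp [hx]
      have hmem : w x ∈ Metric.ball c R := by
        have := hkR x hx
        rw [Metric.mem_ball]; linarith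
      have := circleIntegral.integral_sub_inv_of_mem_ball hmem
      rw [circleIntegral, intervalIntegral.integral_of_le hpi] at this
      rw [← this, ← integral_mul_const]
      refine integral_congr_ae (Eventually.of_forall fun θ => ?_)
      simp only [smul_eq_mul]; ring
    simp_rw [this]
  · have hmap : Measurable fun p : ℝ × X => circleMap c R p.1 - w p.2 :=
      ((continuous_circleMap c R).measurable.comp measurable_fst).sub (hw.comp measurable_snd)
    have hd : Measurable fun p : ℝ × X => deriv (circleMap c R) p.1 :=
      (measurable_deriv _).comp measurable_fst
    have hk2 : Integrable (fun p : ℝ × X => k p.2)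
        ((volume.restrict (Ioc 0 (2 * Real.pi))).prod μ) := by
      simpa using (integrable_const (1 : ℂ)).mul_prod hk
    refine (hk2.norm.mul_const (R * δ⁻¹)).mono' ?_ (Eventually.of_forall ?_)
    · exact hd.aestronglyMeasurable.mul
        (hk2.aestronglyMeasurable.mul hmap.inv.aestronglyMeasurable)
    · rintro ⟨θ, x⟩
      by_cases hx : k x = 0
      · simp [Function.uncurry, hx]
      simp only [Function.uncurry, norm_mul, norm_inv]
      have : ‖deriv (circleMap c R) θ‖ = R := by simp [deriv_circleMap, abs_of_pos hR]
      rw [this]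
      have := inv_anti₀ hδ (hfar x θ hx)
      calc R * (‖k x‖ * ‖circleMap c R θ - w x‖⁻¹) ≤ R * (‖k x‖ * δ⁻¹) := by gcongr
        _ = _ := by ring

/-- A density with support in a small square has vanishing integral as soon as its Cauchy
transform, far below the square, is given by a function holomorphic in a vertical half-strip
around the square. -/
lemma integral_eq_zero_of_cauchyTransform {X : Type*} [MeasurableSpace X] {μ : Measure X}
    [SFinite μ] {k w : X → ℂ} (hk : Integrable k μ) (hw : Measurable w) {c : ℂ} {s b : ℝ}
    (hs : 0 < s) (hkc : ∀ x, k x ≠ 0 → |(w x).re - c.re| ≤ s ∧ |(w x).im - c.im| ≤ s)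
    {H : ℂ → ℂ} (hH : DifferentiableOn ℂ H {ζ | |ζ.re - c.re| < 3 * s ∧ ζ.im < c.im + 3 * s})
    (hHk : ∀ ζ : ℂ, |ζ.re - c.re| < 3 * s → ζ.im < b → ∫ x, k x * (ζ - w x)⁻¹ ∂μ = H ζ) :
    ∫ x, k x ∂μ = 0 := by
  set T : ℂ → ℂ := fun ζ => ∫ x, k x * (ζ - w x)⁻¹ ∂μ with hT
  set Q : Set ℂ := {ζ | |ζ.re - c.re| ≤ s ∧ |ζ.im - c.im| ≤ s} with hQ
  have hQc : IsClosed Q := by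
    rw [hQ, ofPred_and]
    exact (isClosed_le (by fun_prop) (by fun_prop)).inter (isClosed_le (by fun_prop) (by fun_prop))
  set A : Set ℂ := {ζ | |ζ.re - c.re| < 3 * s ∧ ζ.im < c.im + 3 * s} with hA
  have hAo : IsOpen A := by
    rw [hA, ofPred_and]
    exact (isOpen_lt (by fun_prop) (by fun_prop)).inter (isOpen_lt (by fun_prop) (by fun_prop))
  have hTQ : DifferentiableOn ℂ T Qᶜ :=
    differentiableOn_cauchyTransform hk hw hQc.isOpen_compl fun x hx h => h (hkc x hx)
  let P : ℝ → ℝ → ℝ → ℝ → Set ℂ := fun l r d u => Ioo l r ×ℂ Ioo d u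
  have hP : ∀ l r d u, IsPreconnected (P l r d u) := fun l r d u =>
    (((convex_Ioo l r).linear_preimage reCLM.toLinearMap).inter
      ((convex_Ioo d u).linear_preimage imCLM.toLinearMap)).isPreconnected
  obtain ⟨d, hd1, hd2⟩ : ∃ d, d < b ∧ d < c.im - 2 * s :=
    ⟨min b (c.im - 2 * s) - 1, by linarith [min_le_left b (c.im - 2 * s)],
      by linarith [min_le_right b (c.im - 2 * s)]⟩
  set x := c.re
  set y := c.im
  let B := P (x - 3 * s) (x + 3 * s) (d - 1) (y - s)
  let L := P (x - 3 * s) (x - s) (d - 1) (y + 3 * s)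
  let R := P (x + s) (x + 3 * s) (d - 1) (y + 3 * s)
  let U := P (x - 3 * s) (x + 3 * s) (y + s) (y + 3 * s)
  have hmem : ∀ {l r d u : ℝ} {ζ : ℂ},
      ζ ∈ P l r d u ↔ (l < ζ.re ∧ ζ.re < r) ∧ (d < ζ.im ∧ ζ.im < u) := by
    intro l r d u ζ; rfl
  have hcon : IsPreconnected (((B ∪ L) ∪ U) ∪ R) := by
    refine IsPreconnected.union (⟨x + 2 * s, y + 2 * s⟩ : ℂ) ?_ ?_
      (IsPreconnected.union (⟨x - 2 * s, y + 2 * s⟩ : ℂ) ?_ ?_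
        (IsPreconnected.union (⟨x - 2 * s, y - 2 * s⟩ : ℂ) ?_ ?_ (hP _ _ _ _) (hP _ _ _ _))
        (hP _ _ _ _)) (hP _ _ _ _)
    · exact Or.inr (hmem.2 ⟨⟨by dsimp; linarith, by dsimp; linarith⟩,
        by dsimp; linarith, by dsimp; linarith⟩)
    · exact hmem.2 ⟨⟨by dsimp; linarith, by dsimp; linarith⟩,
        by dsimp; linarith, by dsimp; linarith⟩
    · exact Or.inr (hmem.2 ⟨⟨by dsimp; linarith, by dsimp; linarith⟩,
        by dsimp; linarith, by dsimp; linarith⟩)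
    · exact hmem.2 ⟨⟨by dsimp; linarith, by dsimp; linarith⟩,
        by dsimp; linarith, by dsimp; linarith⟩
    · exact hmem.2 ⟨⟨by dsimp; linarith, by dsimp; linarith⟩,
        by dsimp; linarith, by dsimp; linarith⟩
    · exact hmem.2 ⟨⟨by dsimp; linarith, by dsimp; linarith⟩,
        by dsimp; linarith, by dsimp; linarith⟩
  have hsub : ((B ∪ L) ∪ U) ∪ R ⊆ A \ Q := by
    rintro ζ (((h | h) | h) | h) <;> obtain ⟨⟨h1, h2⟩, h3, h4⟩ := hmem.1 h <;>
      refine ⟨⟨abs_lt.2 ⟨by linarith, by linarith⟩, by linarith⟩, fun hq => ?_⟩ <;>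
      obtain ⟨q1, q2⟩ := hq <;> rw [abs_le] at q1 q2 <;> linarith [q1.1, q1.2, q2.1, q2.2]
  have hPo : ∀ l r d u, IsOpen (P l r d u) := fun l r d u => isOpen_Ioo.reProdIm isOpen_Ioo
  have hopen : IsOpen (((B ∪ L) ∪ U) ∪ R) :=
    (((hPo _ _ _ _).union (hPo _ _ _ _)).union (hPo _ _ _ _)).union (hPo _ _ _ _)
  have heq : EqOn T H (((B ∪ L) ∪ U) ∪ R) := by
    refine AnalyticOnNhd.eqOn_of_preconnected_of_eventuallyEq (z₀ := (⟨x, d - 1 / 2⟩ : ℂ))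
      ((hTQ.mono fun ζ h => (hsub h).2).analyticOnNhd hopen)
      ((hH.mono fun ζ h => (hsub h).1).analyticOnNhd hopen) hcon ?_ ?_
    · exact Or.inl (Or.inl (Or.inl (hmem.2 ⟨⟨by dsimp; linarith, by dsimp; linarith⟩,
        by dsimp; linarith, by dsimp; linarith⟩)))
    · have ho : IsOpen {ζ : ℂ | |ζ.re - x| < 3 * s ∧ ζ.im < b} := by
        rw [ofPred_and]
        exact (isOpen_lt (by fun_prop) (by fun_prop)).inter (isOpen_lt (by fun_prop) (by fun_prop))
      filter_upwards [ho.mem_nhds (⟨by simpa using hs, by dsimp; linarith⟩)] with ζ hζ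
      exact hHk ζ hζ.1 hζ.2
  have hball : Metric.closedBall c (2 * s) ⊆ A := by
    intro ζ hζ
    rw [mem_closedBall_iff_norm] at hζ
    have h1 := (abs_re_le_norm (ζ - c)).trans hζ
    have h2 := (abs_im_le_norm (ζ - c)).trans hζ
    rw [sub_re] at h1
    rw [sub_im, abs_le] at h2
    exact ⟨by linarith, by linarith [h2.2]⟩
  have hsph : ∀ ζ ∈ Metric.sphere c (2 * s), ζ ∈ ((B ∪ L) ∪ U) ∪ R := by
    intro ζ hζ
    rw [mem_sphere_iff_norm] at hζ
    have h1 := (abs_re_le_norm (ζ - c)).trans hζ.le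
    have h2 := (abs_im_le_norm (ζ - c)).trans hζ.le
    have h3 := Complex.sq_norm (ζ - c)
    rw [hζ, normSq_apply] at h3
    rw [sub_re, abs_le] at h1
    rw [sub_im, abs_le] at h2
    rw [sub_re, sub_im] at h3
    obtain ⟨h1a, h1b⟩ := h1
    obtain ⟨h2a, h2b⟩ := h2
    by_cases c1 : ζ.re < x - s
    · exact Or.inl (Or.inl (Or.inr (hmem.2 ⟨⟨by linarith, by linarith⟩, by linarith, by linarith⟩)))
    by_cases c2 : x + s < ζ.re
    · exact Or.inr (hmem.2 ⟨⟨by linarith, by linarith⟩, by linarith, by linarith⟩)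
    push Not at c1 c2
    by_cases c3 : ζ.im < y - s
    · exact Or.inl (Or.inl (Or.inl (hmem.2 ⟨⟨by linarith, by linarith⟩, by linarith, by linarith⟩)))
    push Not at c3
    by_cases c4 : y + s < ζ.im
    · exact Or.inl (Or.inr (hmem.2 ⟨⟨by linarith, by linarith⟩, by linarith, by linarith⟩))
    push Not at c4
    exfalso
    have e1 : (ζ.re - x) * (ζ.re - x) ≤ s * s := by
      rw [← abs_mul_abs_self]
      have : |ζ.re - x| ≤ s := abs_le.2 ⟨by linarith, by linarith⟩
      gcongr
    have e2 : (ζ.im - y) * (ζ.im - y) ≤ s * s := by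
      rw [← abs_mul_abs_self]
      have : |ζ.im - y| ≤ s := abs_le.2 ⟨by linarith, by linarith⟩
      gcongr
    nlinarith
  have hz : ∮ ζ in C(c, 2 * s), H ζ = 0 := by
    refine Complex.circleIntegral_eq_zero_of_differentiable_on_off_countable (by positivity)
      countable_empty (hH.continuousOn.mono hball) fun z hz => ?_
    exact hH.differentiableAt (hAo.mem_nhds (hball (Metric.ball_subset_closedBall hz.1)))
  have hTH : ∮ ζ in C(c, 2 * s), T ζ = ∮ ζ in C(c, 2 * s), H ζ :=
    circleIntegral.integral_congr (by positivity) fun ζ hζ => heq (hsph ζ hζ)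
  have hkey := circleIntegral_cauchyTransform hk hw (c := c) (R := 2 * s) (δ := s / 2)
    (by positivity) (by positivity) fun z hz => by
      obtain ⟨h1, h2⟩ := hkc z hz
      rw [dist_eq_norm]
      refine abs_le_of_sq_le_sq' ?_ (by linarith) |>.2
      have h3 := Complex.sq_norm (w z - c)
      rw [normSq_apply, sub_re, sub_im] at h3
      rw [abs_le] at h1 h2
      nlinarith [h1.1, h1.2, h2.1, h2.2]
  rw [hTH, hz] at hkey
  simpa [Real.pi_ne_zero] using hkey.symm

/-- The `i`-th partial derivative of a complex function on `ℝ^m`. -/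
noncomputable def partialDeriv {m : ℕ} (i : Fin m) (f : (Fin m → ℝ) → ℂ) (x : Fin m → ℝ) : ℂ :=
  fderiv ℝ f x (Pi.single i 1)

/-- The action of the complex vector field with coefficients `c` on functions. -/
noncomputable def applyField {m : ℕ} (c : (Fin m → ℝ) → Fin m → ℂ) (f : (Fin m → ℝ) → ℂ)
    (x : Fin m → ℝ) : ℂ :=
  ∑ i, c x i * partialDeriv i f x

section Calculus

variable {m : ℕ} {c : (Fin m → ℝ) → Fin m → ℂ} {f g : (Fin m → ℝ) → ℂ} {x : Fin m → ℝ}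

lemma ContDiff.partialDeriv {n k : ℕ∞ω} (hf : ContDiff ℝ n f) (hk : k + 1 ≤ n) (i : Fin m) :
    ContDiff ℝ k (partialDeriv i f) :=
  (hf.fderiv_right hk).clm_apply contDiff_const

lemma ContDiff.applyField {n k : ℕ∞ω} (hc : ContDiff ℝ k c) (hf : ContDiff ℝ n f)
    (hk : k + 1 ≤ n) : ContDiff ℝ k (applyField c f) :=
  ContDiff.sum fun i _ => (contDiff_pi.1 hc i).mul (hf.partialDeriv hk i)

lemma applyField_add (hf : DifferentiableAt ℝ f x) (hg : DifferentiableAt ℝ g x) :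
    applyField c (fun y => f y + g y) x = applyField c f x + applyField c g x := by
  simp only [applyField, partialDeriv, fderiv_fun_add hf hg, ← Finset.sum_add_distrib]
  exact Finset.sum_congr rfl fun i _ => by simp [mul_add]

lemma applyField_mul (hf : DifferentiableAt ℝ f x) (hg : DifferentiableAt ℝ g x) :
    applyField c (fun y => f y * g y) x = f x * applyField c g x + g x * applyField c f x := by
  simp only [applyField, partialDeriv, fderiv_fun_mul hf hg, Finset.mul_sum,
    ← Finset.sum_add_distrib]
  exact Finset.sum_congr rfl fun i _ => by simp; ring

lemma applyField_const_mul (r : ℂ) (hf : DifferentiableAt ℝ f x) :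
    applyField c (fun y => r * f y) x = r * applyField c f x := by
  simp only [applyField, partialDeriv, fderiv_const_mul hf, Finset.mul_sum]
  exact Finset.sum_congr rfl fun i _ => by simp; ring

lemma applyField_comp {φ : ℂ → ℂ} {φ' : ℂ} (hφ : HasDerivAt φ φ' (f x))
    (hf : DifferentiableAt ℝ f x) :
    applyField c (fun y => φ (f y)) x = φ' * applyField c f x := by
  have := (hφ.hasFDerivAt.restrictScalars ℝ).comp x hf.hasFDerivAt
  have h2 : fderiv ℝ (fun y => φ (f y)) x = _ := this.fderiv
  simp only [applyField, partialDeriv, h2, Finset.mul_sum]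
  exact Finset.sum_congr rfl fun i _ => by simp; ring

lemma applyField_congr (h : f =ᶠ[𝓝 x] g) : applyField c f x = applyField c g x := by
  simp only [applyField, partialDeriv, h.fderiv_eq]

lemma applyField_of_eventually_zero (h : f =ᶠ[𝓝 x] fun _ => 0) : applyField c f x = 0 := by
  rw [applyField_congr h]
  simp [applyField, partialDeriv]

end Calculus

section IntegrationByParts

variable {m : ℕ} {C : (Fin m → ℝ) → Fin m → ℂ}

lemma integral_applyField_eq_zero (hC : ContDiff ℝ 1 C)
    (hdiv : ∀ x, ∑ i, partialDeriv i (fun y => C y i) x = 0) {v : (Fin m → ℝ) → ℂ}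
    (hv : ContDiff ℝ 1 v) (hvs : HasCompactSupport v) : ∫ x, applyField C v x = 0 := by
  have hCi : ∀ i, ContDiff ℝ 1 fun y => C y i := contDiff_pi.1 hC
  have hv' : ∀ i, Continuous (partialDeriv i v) := fun i =>
    (hv.partialDeriv (k := 0) (by norm_num) i).continuous
  have hC' : ∀ i, Continuous (partialDeriv i fun y => C y i) := fun i =>
    ((hCi i).partialDeriv (k := 0) (by norm_num) i).continuous
  have hvs' : ∀ i, HasCompactSupport (partialDeriv i v) := fun i => by
    refine (hvs.fderiv (𝕜 := ℝ)).mono' fun x hx => subset_tsupport _ ?_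
    intro h
    exact hx (by simp [partialDeriv, h])
  have h1 : ∀ i, Integrable fun x => C x i * partialDeriv i v x := fun i =>
    ((hCi i).continuous.mul (hv' i)).integrable_of_hasCompactSupport (hvs' i).mul_left
  have h2 : ∀ i, Integrable fun x => partialDeriv i (fun y => C y i) x * v x := fun i =>
    ((hC' i).mul hv.continuous).integrable_of_hasCompactSupport hvs.mul_left
  simp only [applyField]
  rw [integral_finsetSum _ fun i _ => h1 i]
  have h3 : ∀ i, ∫ x, C x i * partialDeriv i v x =
      -∫ x, partialDeriv i (fun y => C y i) x * v x := fun i =>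
    integral_mul_fderiv_eq_neg_fderiv_mul_of_integrable (h2 i) (h1 i)
      (((hCi i).continuous.mul hv.continuous).integrable_of_hasCompactSupport hvs.mul_left)
      (fun x _ => (hCi i).differentiable (by norm_num) x)
      (fun x _ => hv.differentiable (by norm_num) x)
  simp_rw [h3]
  rw [Finset.sum_neg_distrib, ← integral_finsetSum _ fun i _ => h2 i]
  simp [← Finset.sum_mul, hdiv]

lemma integral_cutoff_cauchy_kernel (hC : ContDiff ℝ 1 C)
    (hdiv : ∀ x, ∑ i, partialDeriv i (fun y => C y i) x = 0) {w u χ : (Fin m → ℝ) → ℂ}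
    (hw : ContDiff ℝ 1 w) (hCw : ∀ x, applyField C w x = 0) (hu : ContDiff ℝ 1 u)
    (hχ : ContDiff ℝ 1 χ) (hχs : HasCompactSupport χ) {ζ : ℂ} (hζ : ∀ x ∈ tsupport χ, w x ≠ ζ) :
    ∫ x, χ x * applyField C u x * (ζ - w x)⁻¹ = ∫ x, -(u x * applyField C χ x) * (ζ - w x)⁻¹ := by
  have hoff : ∀ x, x ∉ tsupport χ → χ =ᶠ[𝓝 x] fun _ => 0 := fun x hx =>
    notMem_tsupport_iff_eventuallyEq.1 hx
  have hwd : Differentiable ℝ w := hw.differentiable (by norm_num)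
  have hud : Differentiable ℝ u := hu.differentiable (by norm_num)
  have hχd : Differentiable ℝ χ := hχ.differentiable (by norm_num)
  have hinv : ∀ x ∈ tsupport χ, ContDiffAt ℝ 1 (fun y => (ζ - w y)⁻¹) x := fun x hx =>
    (contDiffAt_const.sub hw.contDiffAt).inv (sub_ne_zero.2 (hζ x hx).symm)
  set G : (Fin m → ℝ) → ℂ := fun x => χ x * (ζ - w x)⁻¹ with hG
  have hGoff : ∀ x, x ∉ tsupport χ → G =ᶠ[𝓝 x] fun _ => 0 := fun x hx => by
    filter_upwards [hoff x hx] with y hy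
    simp [hG, hy]
  have hGc : ContDiff ℝ 1 G := contDiff_iff_contDiffAt.2 fun x => by
    by_cases hx : x ∈ tsupport χ
    · exact hχ.contDiffAt.mul (hinv x hx)
    · exact contDiffAt_const.congr_of_eventuallyEq (hGoff x hx)
  have hGs : HasCompactSupport G := hχs.mul_right
  have hcont : ∀ {f : (Fin m → ℝ) → ℂ}, ContDiff ℝ 1 f → Continuous (applyField C f) := fun hf =>
    ((hC.of_le zero_le_one).applyField hf (by norm_num)).continuous
  have hGapply : ∀ x, applyField C G x = applyField C χ x * (ζ - w x)⁻¹ := by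
    intro x
    by_cases hx : x ∈ tsupport χ
    · have hφ : HasDerivAt (fun z : ℂ => (ζ - z)⁻¹) (1 / (ζ - w x) ^ 2) (w x) := by
        simpa using ((hasDerivAt_id (w x)).const_sub ζ).fun_inv (sub_ne_zero.2 (hζ x hx).symm)
      rw [hG, applyField_mul (hχd x) ((hinv x hx).differentiableAt (by norm_num)),
        applyField_comp hφ (hwd x), hCw]
      ring
    · rw [applyField_of_eventually_zero (hGoff x hx), applyField_of_eventually_zero (hoff x hx),
        zero_mul]
  have key := integral_applyField_eq_zero hC hdiv (hu.mul hGc) hGs.mul_left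
  have hprod : ∀ x, applyField C (fun y => u y * G y) x =
      χ x * applyField C u x * (ζ - w x)⁻¹ - -(u x * applyField C χ x) * (ζ - w x)⁻¹ := by
    intro x
    rw [applyField_mul (hud x) (hGc.differentiable (by norm_num) x), hGapply]
    simp only [hG]; ring
  have i1 : Integrable fun x => χ x * applyField C u x * (ζ - w x)⁻¹ := by
    have : (fun x => χ x * applyField C u x * (ζ - w x)⁻¹) = fun x => applyField C u x * G x := by
      funext x; simp only [hG]; ring
    rw [this]
    exact ((hcont hu).mul hGc.continuous).integrable_of_hasCompactSupport hGs.mul_left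
  have i2 : Integrable fun x => -(u x * applyField C χ x) * (ζ - w x)⁻¹ := by
    have h : (fun x => -(u x * applyField C χ x) * (ζ - w x)⁻¹) =
        fun x => -(u x * applyField C G x) := by
      funext x; rw [hGapply]; ring
    rw [h]
    refine (hu.continuous.mul (hcont hGc)).neg.integrable_of_hasCompactSupport
      (hGs.mono' fun x hx => ?_)
    by_contra hx'
    exact hx (by
      simp [applyField_of_eventually_zero (notMem_tsupport_iff_eventuallyEq.1 hx')])
  rw [← sub_eq_zero, ← integral_sub i1 i2, ← key]
  exact integral_congr_ae (Eventually.of_forall fun x => (hprod x).symm)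

end IntegrationByParts

section Smallness

variable {E F : Type*} [NormedAddCommGroup E] [NormedSpace ℝ E] [NormedAddCommGroup F]
  [NormedSpace ℝ F]

lemma exists_bound_iteratedFDeriv {f : E → F} (hf : ContDiff ℝ ∞ f) (hfs : HasCompactSupport f)
    (h : ℕ) : ∃ K, 0 < K ∧ ∀ j ≤ h, ∀ x, ‖iteratedFDeriv ℝ j f x‖ ≤ K := by
  have : ∀ j : ℕ, ∃ K, ∀ x, ‖iteratedFDeriv ℝ j f x‖ ≤ K := fun j =>
    (hfs.iteratedFDeriv j).exists_bound_of_continuous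
      (hf.continuous_iteratedFDeriv (by exact_mod_cast le_top))
  choose K hK using this
  refine ⟨1 + ∑ j ∈ Finset.range (h + 1), |K j|, by positivity, fun j hj x => ?_⟩
  have h1 : |K j| ≤ ∑ j ∈ Finset.range (h + 1), |K j| :=
    Finset.single_le_sum (f := fun j => |K j|) (fun _ _ => abs_nonneg _)
      (Finset.mem_range.2 (by omega))
  linarith [hK j x, le_abs_self (K j)]

lemma exists_forall_norm_iteratedFDeriv_smul_lt {f : E → F} (hf : ContDiff ℝ ∞ f)
    (hfs : HasCompactSupport f) (h : ℕ) {ε : ℝ} (hε : 0 < ε) :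
    ∃ η₀ > 0, ∀ η : ℝ, |η| ≤ η₀ → ∀ x, ∀ j ≤ h,
      ‖iteratedFDeriv ℝ j (fun y => η • f y) x‖ < ε := by
  obtain ⟨K, hK0, hK⟩ := exists_bound_iteratedFDeriv hf hfs h
  refine ⟨ε / (2 * K), by positivity, fun η hη x j hj => ?_⟩
  have : iteratedFDeriv ℝ j (fun y => η • f y) x = η • iteratedFDeriv ℝ j f x :=
    iteratedFDeriv_const_smul_apply (hf.contDiffAt.of_le (by exact_mod_cast le_top))
  rw [this, norm_smul, Real.norm_eq_abs]
  calc |η| * ‖iteratedFDeriv ℝ j f x‖ ≤ ε / (2 * K) * K := by gcongr; exact hK j hj x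
    _ = ε / 2 := by field_simp
    _ < ε := by linarith

end Smallness

section Perturbation

variable {m : ℕ}

lemma integrable_mul_inv_sub {X : Type*} [MeasurableSpace X] {μ : Measure X} {k w : X → ℂ}
    (hk : Integrable k μ) (hw : Measurable w) {ζ : ℂ} {δ : ℝ} (hδ : 0 < δ)
    (hkw : ∀ x, k x ≠ 0 → δ ≤ ‖ζ - w x‖) : Integrable (fun x => k x * (ζ - w x)⁻¹) μ := by
  refine (hk.norm.mul_const δ⁻¹).mono' (hk.aestronglyMeasurable.mul
    (by fun_prop : Measurable fun x => (ζ - w x)⁻¹).aestronglyMeasurable)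
    (Eventually.of_forall fun x => ?_)
  by_cases hx : k x = 0
  · simp [hx]
  rw [norm_mul, norm_inv]
  gcongr
  exact hkw x hx

/-- The solid neighbourhoods on which the vector field gets perturbed. -/
def perturbationSet (w : (Fin m → ℝ) → ℂ) (p₀ e : Fin m → ℝ) (t : ℝ) : Set (Fin m → ℝ) :=
  {x | dist x (p₀ + t • e) < t ∧ ‖w x - w (p₀ + t • e)‖ < t / 16}

lemma isOpen_perturbationSet {w : (Fin m → ℝ) → ℂ} (hw : Continuous w) (p₀ e : Fin m → ℝ)
    (t : ℝ) : IsOpen (perturbationSet w p₀ e t) := by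
  rw [perturbationSet, ofPred_and]
  exact (isOpen_lt (by fun_prop) (by fun_prop)).inter (isOpen_lt (by fun_prop) (by fun_prop))

lemma dist_lt_of_mem_perturbationSet {w : (Fin m → ℝ) → ℂ} {p₀ e x : Fin m → ℝ} {t : ℝ}
    (hx : x ∈ perturbationSet w p₀ e t) : dist x p₀ < t * (1 + ‖e‖) := by
  have h1 := hx.1
  have ht : 0 < t := dist_nonneg.trans_lt h1
  have h2 := dist_triangle x (p₀ + t • e) p₀
  have h3 : dist (p₀ + t • e) p₀ = t * ‖e‖ := by
    rw [dist_eq_norm, add_sub_cancel_left, norm_smul, Real.norm_eq_abs, abs_of_pos ht]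
  linarith

/-- The unique continuation principle behind the perturbation: if `C` is divergence free,
annihilates `w`, and `w` maps a neighbourhood of `p₀` to the closed upper half-plane with `p₀`
the only preimage of the real axis, then the right-hand side of `C u = k` has vanishing integral
over any part of its support whose image under `w` is separated from the rest by a vertical
strip. -/
lemma setIntegral_applyField_eq_zero {C : (Fin m → ℝ) → Fin m → ℂ} (hC : ContDiff ℝ 1 C)
    (hdiv : ∀ x, ∑ i, partialDeriv i (fun y => C y i) x = 0) {w u : (Fin m → ℝ) → ℂ}
    (hw : ContDiff ℝ 1 w) (hCw : ∀ x, applyField C w x = 0) (hu : ContDiff ℝ 1 u)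
    {p₀ : Fin m → ℝ} {κ R : ℝ} (hκ : 0 < κ) (hR : 0 < R)
    (hwκ : ∀ x ∈ Metric.closedBall p₀ R, κ * ‖x - p₀‖ ^ 2 ≤ (w x).im)
    {B : Set (Fin m → ℝ)} (hB : IsOpen B) (hBR : B ⊆ Metric.ball p₀ (R / 2)) {c : ℂ} {s : ℝ}
    (hs : 0 < s) (hcs : c.im + 3 * s < κ * (R / 2) ^ 2) (hBw : ∀ x ∈ B, ‖w x - c‖ < s)
    (hout : ∀ x ∈ Metric.closedBall p₀ R, applyField C u x ≠ 0 → x ∉ B →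
      3 * s ≤ |(w x).re - c.re|) :
    IntegrableOn (applyField C u) B ∧ ∫ x in B, applyField C u x = 0 := by
  let bump : ContDiffBump p₀ := ⟨R / 2, R, by positivity, by linarith⟩
  set χ : (Fin m → ℝ) → ℂ := fun x => (bump x : ℂ) with hχdef
  have hχ : ContDiff ℝ 1 χ := ofRealCLM.contDiff.comp bump.contDiff
  have hχsub : tsupport χ ⊆ Metric.closedBall p₀ R := by
    rw [show Metric.closedBall p₀ R = tsupport bump from bump.tsupport_eq.symm]
    refine closure_mono fun x hx h => hx ?_
    simp [hχdef, h]
  have hχs : HasCompactSupport χ := (isCompact_closedBall p₀ R).of_isClosed_subset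
    (isClosed_tsupport χ) hχsub
  have hχout : ∀ x, x ∉ Metric.closedBall p₀ R → χ x = 0 := fun x hx =>
    image_eq_zero_of_notMem_tsupport fun h => hx (hχsub h)
  have hcont : ∀ {f : (Fin m → ℝ) → ℂ}, ContDiff ℝ 1 f → Continuous (applyField C f) := fun hf =>
    ((hC.of_le zero_le_one).applyField hf (by norm_num)).continuous
  set k : (Fin m → ℝ) → ℂ := fun x => χ x * applyField C u x with hkdef
  have hkc : Continuous k := hχ.continuous.mul (hcont hu)
  have hki : Integrable k := hkc.integrable_of_hasCompactSupport hχs.mul_right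
  have hkB : ∀ x ∈ B, k x = applyField C u x := fun x hx => by
    have : bump x = 1 := bump.one_of_mem_closedBall (Metric.ball_subset_closedBall (hBR hx))
    simp [hkdef, hχdef, this]
  have hkball : ∀ x, k x ≠ 0 → x ∈ Metric.closedBall p₀ R := fun x hx => by
    by_contra h
    exact hx (by simp [hkdef, hχout x h])
  have hwm : Measurable w := hw.continuous.measurable
  have him : ∀ x ∈ Metric.closedBall p₀ R, 0 ≤ (w x).im := fun x hx =>
    le_trans (by positivity) (hwκ x hx)
  set k₁ := B.indicator k with hk₁
  set k₂ := Bᶜ.indicator k with hk₂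
  have hk₁i : Integrable k₁ := hki.indicator hB.measurableSet
  have hk₂i : Integrable k₂ := hki.indicator hB.measurableSet.compl
  have hk₁m : ∀ x, k₁ x ≠ 0 → x ∈ B ∧ k x ≠ 0 := fun x hx => by
    have h1 := mem_of_indicator_ne_zero hx
    exact ⟨h1, by rwa [hk₁, indicator_of_mem h1] at hx⟩
  have hk₂m : ∀ x, k₂ x ≠ 0 → x ∉ B ∧ k x ≠ 0 := fun x hx => by
    have h1 := mem_of_indicator_ne_zero hx
    exact ⟨h1, by rwa [hk₂, indicator_of_mem h1] at hx⟩
  set g : (Fin m → ℝ) → ℂ := fun x => -(u x * applyField C χ x) with hg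
  have hχz : ∀ x, applyField C χ x ≠ 0 → x ∈ tsupport χ := fun x hx => by
    by_contra h
    exact hx (applyField_of_eventually_zero (notMem_tsupport_iff_eventuallyEq.1 h))
  have hgi : Integrable g := by
    refine (hu.continuous.mul (hcont hχ)).neg.integrable_of_hasCompactSupport
      (hχs.mono' fun x hx => hχz x fun h => hx ?_)
    simp [h]
  have hgim : ∀ x, g x ≠ 0 → κ * (R / 2) ^ 2 ≤ (w x).im := fun x hx => by
    have h1 : applyField C χ x ≠ 0 := fun h => hx (by simp [hg, h])
    have h2 : R / 2 ≤ ‖x - p₀‖ := by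
      by_contra! h
      rw [← mem_ball_iff_norm] at h
      refine h1 ?_
      have : χ =ᶠ[𝓝 x] fun _ => 1 := by
        filter_upwards [bump.eventuallyEq_one_of_mem_ball h] with y hy
        simp [hχdef, hy]
      rw [applyField_congr this]
      simp [applyField, partialDeriv]
    refine le_trans ?_ (hwκ x (hχsub (hχz x h1)))
    gcongr
  have main : ∫ x, k₁ x = 0 := by
    refine integral_eq_zero_of_cauchyTransform (c := c) (s := s) (b := 0) hk₁i hwm hs ?_
      (H := fun ζ => (∫ x, g x * (ζ - w x)⁻¹) - ∫ x, k₂ x * (ζ - w x)⁻¹) ?_ ?_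
    · intro x hx
      have h1 := (hBw x (hk₁m x hx).1).le
      exact ⟨by simpa using (abs_re_le_norm (w x - c)).trans h1,
        by simpa using (abs_im_le_norm (w x - c)).trans h1⟩
    · refine DifferentiableOn.sub ?_ ?_
      · refine (differentiableOn_cauchyTransform hgi hwm
          (isOpen_lt continuous_im continuous_const : IsOpen {ζ : ℂ | ζ.im < κ * (R / 2) ^ 2})
          fun x hx h => ?_).mono fun ζ hζ => hζ.2.trans hcs
        exact absurd (hgim x hx) (not_le.2 h)
      · refine (differentiableOn_cauchyTransform hk₂i hwm
          (isOpen_lt (by fun_prop) continuous_const : IsOpen {ζ : ℂ | |ζ.re - c.re| < 3 * s})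
          fun x hx h => ?_).mono fun ζ hζ => hζ.1
        obtain ⟨h1, h2⟩ := hk₂m x hx
        exact absurd (hout x (hkball x h2) (fun h0 => h2 (by simp [hkdef, h0])) h1) (not_le.2 h)
    · intro ζ _ hζ
      have hfar : ∀ x, k x ≠ 0 → -ζ.im ≤ ‖ζ - w x‖ := fun x hx => by
        have h1 := abs_im_le_norm (ζ - w x)
        rw [sub_im] at h1
        linarith [neg_abs_le (ζ.im - (w x).im), him x (hkball x hx)]
      have j₁ := integrable_mul_inv_sub hk₁i hwm (neg_pos.2 hζ) fun x hx => hfar x (hk₁m x hx).2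
      have j₂ := integrable_mul_inv_sub hk₂i hwm (neg_pos.2 hζ) fun x hx => hfar x (hk₂m x hx).2
      rw [eq_sub_iff_add_eq, ← integral_add j₁ j₂]
      have hst := integral_cutoff_cauchy_kernel hC hdiv hw hCw hu hχ hχs (ζ := ζ)
        fun x hx h => by
          have := him x (hχsub hx)
          rw [h] at this
          linarith
      rw [← hst]
      refine integral_congr_ae (Eventually.of_forall fun x => ?_)
      dsimp only
      rw [← add_mul]
      congr 1
      exact congrFun (indicator_self_add_compl B k) x
  have hcongr : ∫ x in B, k x = ∫ x in B, applyField C u x :=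
    setIntegral_congr_fun hB.measurableSet hkB
  refine ⟨(hki.integrableOn).congr_fun hkB hB.measurableSet, ?_⟩
  rw [← hcongr, ← integral_indicator hB.measurableSet]
  exact main

end Perturbation

section Nirenberg

variable {m : ℕ}

lemma perturbationSet_strip_disjoint {w : (Fin m → ℝ) → ℂ} {p₀ e : Fin m → ℝ} {τ : ℝ}
    (hτ : 0 < τ)
    (hr : ∀ t, 0 ≤ t → t ≤ τ → |(w (p₀ + t • e)).re - (w p₀).re - t| ≤ t / 4) {n l : ℕ}
    (hnl : n ≠ l) {x : Fin m → ℝ} (hx : x ∈ perturbationSet w p₀ e (τ / 4 ^ l)) :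
    3 * (τ / 4 ^ n / 16) ≤ |(w x).re - (w (p₀ + (τ / 4 ^ n) • e)).re| := by
  have hp : ∀ k, 0 < τ / 4 ^ k := fun k => by positivity
  have hle : ∀ k : ℕ, τ / 4 ^ k ≤ τ := fun k =>
    div_le_self hτ.le (one_le_pow₀ (by norm_num))
  have hquarter : ∀ {k j : ℕ}, k < j → τ / 4 ^ j ≤ τ / 4 ^ k / 4 := fun {k j} hkj => by
    rw [div_div, ← pow_succ]
    exact div_le_div_of_nonneg_left hτ.le (by positivity) (pow_le_pow_right₀ (by norm_num) hkj)
  have h1 := hr _ (hp n).le (hle n)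
  have h2 := hr _ (hp l).le (hle l)
  have h3 := ((abs_re_le_norm (w x - w (p₀ + (τ / 4 ^ l) • e))).trans_lt hx.2)
  rw [sub_re] at h3
  rw [abs_le] at h1 h2
  rw [abs_lt] at h3
  rcases lt_or_gt_of_ne hnl with h | h
  · have := hquarter h
    refine le_trans ?_ (neg_le_abs _)
    linarith [hp n, h1.1, h1.2, h2.1, h2.2, h3.1, h3.2]
  · have := hquarter h
    refine le_trans ?_ (le_abs_self _)
    linarith [hp n, hp l, h1.1, h1.2, h2.1, h2.2, h3.1, h3.2]

lemma exists_forall_abs_re_sub_le {w : (Fin m → ℝ) → ℂ} {p₀ e : Fin m → ℝ}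
    (hw : DifferentiableAt ℝ w p₀) (he : (fderiv ℝ w p₀ e).re = 1) :
    ∃ τ : ℝ, 0 < τ ∧ τ ≤ 1 ∧
      ∀ t, 0 ≤ t → t ≤ τ → |(w (p₀ + t • e)).re - (w p₀).re - t| ≤ t / 4 := by
  have h1 : HasDerivAt (fun t : ℝ => w (p₀ + t • e)) (fderiv ℝ w p₀ e) 0 := by
    have h2 : HasDerivAt (fun t : ℝ => p₀ + t • e) e 0 := by
      simpa using ((hasDerivAt_id (0 : ℝ)).smul_const e).const_add p₀
    have h3 : HasFDerivAt w (fderiv ℝ w p₀) (p₀ + (0 : ℝ) • e) := by simpa using hw.hasFDerivAt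
    exact h3.comp_hasDerivAt (0 : ℝ) h2
  have h4 : HasDerivAt (fun t : ℝ => (w (p₀ + t • e)).re) 1 0 := by
    have := reCLM.hasFDerivAt.comp_hasDerivAt (0 : ℝ) h1
    rw [← he]
    exact this
  have h5 := (hasDerivAt_iff_isLittleO_nhds_zero.1 h4).def (by norm_num : (0 : ℝ) < 1 / 4)
  obtain ⟨r, hr, hball⟩ := Metric.eventually_nhds_iff.1 h5
  refine ⟨min 1 (r / 2), by positivity, min_le_left _ _, fun t ht0 ht => ?_⟩
  have := hball (y := t) (by
    rw [dist_zero_right, Real.norm_eq_abs, abs_of_nonneg ht0]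
    linarith [min_le_right 1 (r / 2)])
  simp only [zero_add, zero_smul, add_zero, smul_eq_mul, mul_one, Real.norm_eq_abs,
    abs_of_nonneg ht0] at this
  linarith

lemma fderiv_eq_zero_of_partialDeriv {u : (Fin m → ℝ) → ℂ} {x : Fin m → ℝ}
    (h : ∀ i, partialDeriv i u x = 0) : fderiv ℝ u x = 0 := by
  refine ContinuousLinearMap.coe_injective ((Pi.basisFun ℝ (Fin m)).ext fun i => ?_)
  simpa [partialDeriv] using h i

/-- Every point at which `J a` agrees with a divergence free field `C` having a first integral
`w` with `Im w` strictly minimal there becomes a common critical point of all solutions after an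
arbitrarily small perturbation of `a`. -/
theorem exists_perturbation_fderiv_eq_zero {a C : (Fin m → ℝ) → Fin m → ℂ}
    (hC : ContDiff ℝ 1 C) (hdiv : ∀ x, ∑ i, partialDeriv i (fun y => C y i) x = 0)
    {w J : (Fin m → ℝ) → ℂ} (hw : ContDiff ℝ 1 w) (hCw : ∀ x, applyField C w x = 0)
    {p₀ e : Fin m → ℝ} (hJ : ContinuousAt J p₀) (hJ0 : J p₀ ≠ 0)
    (hCJ : ∀ᶠ x in 𝓝 p₀, ∀ i, C x i = J x * a x i) {κ : ℝ} (hκ : 0 < κ)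
    (hwκ : ∀ᶠ x in 𝓝 p₀, κ * ‖x - p₀‖ ^ 2 ≤ (w x).im) (hw0 : (w p₀).im = 0)
    (he : (fderiv ℝ w p₀ e).re = 1) (h : ℕ) {ε : ℝ} (hε : 0 < ε) :
    ∃ F : (Fin m → ℝ) → Fin m → ℂ, ContDiff ℝ ∞ F ∧
      (∀ x, ∀ j ≤ h, ‖iteratedFDeriv ℝ j F x‖ < ε) ∧
      ∀ u : (Fin m → ℝ) → ℂ, ContDiff ℝ 1 u →
        (∀ᶠ x in 𝓝 p₀, applyField (a + F) u x = 0) → fderiv ℝ u p₀ = 0 := by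
  obtain ⟨τ, hτ0, hτ1, hτ⟩ := exists_forall_abs_re_sub_le
    (hw.differentiable (by norm_num) p₀) he
  set t : ℕ → ℝ := fun n => τ / 4 ^ n with ht
  have htp : ∀ n, 0 < t n := fun n => by positivity
  have htle : ∀ n, t n ≤ 1 := fun n =>
    (div_le_self hτ0.le (one_le_pow₀ (by norm_num))).trans hτ1
  set B : ℕ → Set (Fin m → ℝ) := fun n => perturbationSet w p₀ e (t n) with hB
  have hBo : ∀ n, IsOpen (B n) := fun n => isOpen_perturbationSet hw.continuous _ _ _
  set S : Fin m → Set (Fin m → ℝ) := fun i => ⋃ (n : ℕ) (_ : n % m = i), B n with hS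
  have hSo : ∀ i, IsOpen (S i) := fun i => isOpen_iUnion fun n => isOpen_iUnion fun _ => hBo n
  choose f hfs hf hfr using fun i => (hSo i).exists_contDiff_support_eq (n := ⊤)
  have hf0 : ∀ i x, 0 ≤ f i x := fun i x => (hfr i (mem_range_self x)).1
  have hfS : ∀ i x, f i x ≠ 0 ↔ ∃ n : ℕ, n % m = i ∧ x ∈ B n := fun i x => by
    rw [← Function.mem_support, hfs]
    simp [hS]
  set F : (Fin m → ℝ) → Fin m → ℂ := fun x i => (f i x : ℂ) with hF
  have hFc : ContDiff ℝ ∞ F := contDiff_pi.2 fun i => ofRealCLM.contDiff.comp (hf i)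
  have hFs : HasCompactSupport F := by
    refine HasCompactSupport.of_support_subset_isCompact
      (isCompact_closedBall p₀ (1 + ‖e‖)) fun x hx => ?_
    have : ∃ i, f i x ≠ 0 := by
      by_contra! hc
      exact hx (by funext i; simp [hF, hc i])
    obtain ⟨i, hi⟩ := this
    obtain ⟨n, -, hn⟩ := (hfS i x).1 hi
    have := dist_lt_of_mem_perturbationSet hn
    rw [Metric.mem_closedBall]
    nlinarith [htle n, norm_nonneg e]
  obtain ⟨η, hη0, hη⟩ := exists_forall_norm_iteratedFDeriv_smul_lt hFc hFs h hε
  refine ⟨fun x => η • F x, hFc.const_smul η, hη η (abs_of_pos hη0).le, fun u hu hsol => ?_⟩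
  refine fderiv_eq_zero_of_partialDeriv fun i => ?_
  by_contra hne
  set z := J p₀ * partialDeriv i u p₀ with hz
  have hz0 : z ≠ 0 := mul_ne_zero hJ0 hne
  have hpos : ∀ᶠ x in 𝓝 p₀, 0 < (starRingEnd ℂ z * (J x * partialDeriv i u x)).re := by
    have hc : ContinuousAt (fun x => (starRingEnd ℂ z * (J x * partialDeriv i u x)).re) p₀ :=
      continuous_re.continuousAt.comp (continuousAt_const.mul
        (hJ.mul (hu.partialDeriv (k := 0) (by norm_num) i).continuous.continuousAt))
    refine hc.eventually (lt_mem_nhds ?_)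
    show 0 < (starRingEnd ℂ z * z).re
    rw [← normSq_eq_conj_mul_self, ofReal_re]
    exact normSq_pos.2 hz0
  obtain ⟨R', hR', hball⟩ := Metric.eventually_nhds_iff_ball.1 (hsol.and (hCJ.and (hwκ.and hpos)))
  set R := R' / 2 with hR
  have hR0 : 0 < R := by positivity
  have hin : ∀ x ∈ Metric.closedBall p₀ R, x ∈ Metric.ball p₀ R' := fun x hx =>
    Metric.closedBall_subset_ball (by linarith) hx
  have hCu : ∀ x ∈ Metric.closedBall p₀ R,
      applyField C u x = -(η * ∑ j, J x * f j x * partialDeriv j u x) := by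
    intro x hx
    obtain ⟨h1, h2, -⟩ := hball x (hin x hx)
    have h3 : applyField C u x + η * ∑ j, J x * f j x * partialDeriv j u x =
        J x * applyField (a + fun x => η • F x) u x := by
      simp only [applyField, Finset.mul_sum, ← Finset.sum_add_distrib]
      refine Finset.sum_congr rfl fun j _ => ?_
      simp only [h2 j, Pi.add_apply, Pi.smul_apply, hF, real_smul]
      ring
    rw [h1, mul_zero] at h3
    exact eq_neg_of_add_eq_zero_left h3
  have ht0 : Tendsto t atTop (𝓝 0) := by
    have := (tendsto_pow_atTop_nhds_zero_of_lt_one (r := (1 / 4 : ℝ)) (by norm_num)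
      (by norm_num)).const_mul τ
    simpa [ht, div_eq_mul_inv] using this
  have hev1 : ∀ᶠ n in atTop, t n * (1 + ‖e‖) < R / 2 := by
    have : Tendsto (fun n => t n * (1 + ‖e‖)) atTop (𝓝 0) := by simpa using ht0.mul_const (1 + ‖e‖)
    exact this.eventually (gt_mem_nhds (by positivity))
  have hev2 : ∀ᶠ n in atTop, (w (p₀ + t n • e)).im + 3 * (t n / 16) < κ * (R / 2) ^ 2 := by
    have hc : Continuous fun t : ℝ => (w (p₀ + t • e)).im + 3 * (t / 16) :=
      (continuous_im.comp (hw.continuous.comp (by fun_prop))).add (by fun_prop)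
    have := (hc.tendsto 0).comp ht0
    simp only [zero_smul, add_zero, hw0, zero_div, mul_zero] at this
    exact this.eventually (gt_mem_nhds (by positivity))
  obtain ⟨N, hN⟩ := eventually_atTop.1 (hev1.and hev2)
  have hm : 0 < m := i.pos
  set n := m * N + i with hn
  have hni : n % m = i := by rw [hn, Nat.mul_add_mod, Nat.mod_eq_of_lt i.2]
  obtain ⟨hn1, hn2⟩ := hN n (by
    calc N = 1 * N := (one_mul N).symm
      _ ≤ m * N := Nat.mul_le_mul_right _ hm
      _ ≤ n := Nat.le_add_right _ _)
  have hBR : B n ⊆ Metric.ball p₀ (R / 2) := fun x hx =>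
    (dist_lt_of_mem_perturbationSet hx).trans hn1
  have hsep : ∀ l x, x ∈ B l → l ≠ n →
      3 * (t n / 16) ≤ |(w x).re - (w (p₀ + t n • e)).re| := fun l x hx hl =>
    perturbationSet_strip_disjoint hτ0 hτ hl.symm hx
  obtain ⟨hCint, hzero⟩ := setIntegral_applyField_eq_zero hC hdiv hw hCw hu hκ hR0
    (fun x hx => (hball x (hin x hx)).2.2.1) (hBo n) hBR (c := w (p₀ + t n • e))
    (s := t n / 16) (by have := htp n; positivity) hn2 (fun x hx => hx.2) (fun x hx hx0 hxB => by
      rw [hCu x hx] at hx0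
      have : ∃ j, f j x ≠ 0 := by
        by_contra! hc
        exact hx0 (by simp [hc])
      obtain ⟨j, hj⟩ := this
      obtain ⟨l, -, hl⟩ := (hfS j x).1 hj
      exact hsep l x hl fun hln => hxB (hln ▸ hl))
  have hBin : ∀ x ∈ B n, x ∈ Metric.closedBall p₀ R := fun x hx =>
    Metric.ball_subset_closedBall (Metric.ball_subset_ball (by linarith) (hBR hx))
  have hfj : ∀ x ∈ B n, ∀ j, j ≠ i → f j x = 0 := by
    intro x hx j hj
    by_contra hc
    obtain ⟨l, hl, hxl⟩ := (hfS j x).1 hc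
    have hln : l ≠ n := fun hln => hj (Fin.ext (by rw [← hl, hln, hni]))
    have h1 := hsep l x hxl hln
    have h2 := (abs_re_le_norm (w x - w (p₀ + t n • e))).trans_lt hx.2
    rw [sub_re] at h2
    linarith [htp n]
  have hval : ∀ x ∈ B n, (-starRingEnd ℂ z * applyField C u x).re =
      η * f i x * (starRingEnd ℂ z * (J x * partialDeriv i u x)).re := by
    intro x hx
    rw [hCu x (hBin x hx), Finset.sum_eq_single i (fun j _ hj => by simp [hfj x hx j hj])
      (fun hc => absurd (Finset.mem_univ i) hc), ← re_ofReal_mul]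
    congr 1
    push_cast
    ring
  have hvalpos : ∀ x ∈ B n, 0 < (-starRingEnd ℂ z * applyField C u x).re := by
    intro x hx
    rw [hval x hx]
    have h1 : 0 < f i x := lt_of_le_of_ne (hf0 i x) ((hfS i x).2 ⟨n, hni, hx⟩).symm
    have h2 := (hball x (hin x (hBin x hx))).2.2.2
    positivity
  have hCint' : IntegrableOn (fun x => -starRingEnd ℂ z * applyField C u x) (B n) :=
    hCint.const_mul _
  have hCint0 : ∫ x in B n, (-starRingEnd ℂ z * applyField C u x).re = 0 := by
    have := reCLM.integral_comp_comm hCint'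
    simp only [reCLM_apply] at this
    rw [this, integral_const_mul, hzero, mul_zero, zero_re]
  have hmem : p₀ + t n • e ∈ B n := by
    have := htp n
    refine ⟨by simpa using this, by simp; linarith⟩
  have hgt : 0 < ∫ x in B n, (-starRingEnd ℂ z * applyField C u x).re := by
    rw [setIntegral_pos_iff_support_of_nonneg_ae]
    · refine ((hBo n).measure_pos volume ⟨_, hmem⟩).trans_le (measure_mono fun x hx => ?_)
      exact ⟨(hvalpos x hx).ne', hx⟩
    · exact (ae_restrict_iff' (hBo n).measurableSet).2
        (Eventually.of_forall fun x hx => (hvalpos x hx).le)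
    · exact reCLM.integrable_comp hCint'
  exact hgt.ne' hCint0

end Nirenberg

section Cofactor

variable {m : ℕ}

/-- The complex Jacobian matrix of a tuple of functions. -/
noncomputable def jacobian (F : Fin m → (Fin m → ℝ) → ℂ) (x : Fin m → ℝ) :
    Matrix (Fin m) (Fin m) ℂ :=
  Matrix.of fun j i => partialDeriv i (F j) x

/-- The vector field whose coefficients are the cofactors of the `i₀`-th row of the Jacobian
matrix; it annihilates every `F j` with `j ≠ i₀`. -/
noncomputable def cofactorField (F : Fin m → (Fin m → ℝ) → ℂ) (i₀ : Fin m) (x : Fin m → ℝ)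
    (i : Fin m) : ℂ :=
  (jacobian F x).adjugate i i₀

lemma ContDiff.matrix_det {E : Type*} [NormedAddCommGroup E] [NormedSpace ℝ E] {k : ℕ∞ω}
    {M : E → Matrix (Fin m) (Fin m) ℂ} (hM : ∀ i j, ContDiff ℝ k fun x => M x i j) :
    ContDiff ℝ k fun x => (M x).det := by
  simp only [Matrix.det_apply']
  exact ContDiff.sum fun σ _ => contDiff_const.mul (contDiff_prod fun i _ => hM _ _)

lemma ContDiff.matrix_adjugate {E : Type*} [NormedAddCommGroup E] [NormedSpace ℝ E] {k : ℕ∞ω}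
    {M : E → Matrix (Fin m) (Fin m) ℂ} (hM : ∀ i j, ContDiff ℝ k fun x => M x i j)
    (i j : Fin m) : ContDiff ℝ k fun x => (M x).adjugate i j := by
  simp only [Matrix.adjugate_apply]
  refine ContDiff.matrix_det fun a b => ?_
  simp only [Matrix.updateRow_apply]
  split_ifs
  exacts [contDiff_const, hM a b]

lemma contDiff_jacobian {n k : ℕ∞ω} {F : Fin m → (Fin m → ℝ) → ℂ} (hF : ∀ j, ContDiff ℝ n (F j))
    (hk : k + 1 ≤ n) (i j : Fin m) : ContDiff ℝ k fun x => jacobian F x i j :=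
  (hF i).partialDeriv hk j

lemma applyField_cofactorField (F : Fin m → (Fin m → ℝ) → ℂ) (i₀ j : Fin m) (x : Fin m → ℝ) :
    applyField (cofactorField F i₀) (F j) x = if j = i₀ then (jacobian F x).det else 0 := by
  have h : (jacobian F x * (jacobian F x).adjugate) j i₀ =
      ((jacobian F x).det • (1 : Matrix (Fin m) (Fin m) ℂ)) j i₀ := by
    rw [Matrix.mul_adjugate]
  rw [Matrix.mul_apply, Matrix.smul_apply, Matrix.one_apply, smul_eq_mul, mul_ite, mul_one,
    mul_zero] at h
  rw [← h]
  exact Finset.sum_congr rfl fun i _ => mul_comm _ _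

lemma Matrix.sum_det_updateRow_updateRow_eq_zero (M : Matrix (Fin m) (Fin m) ℂ) {i j : Fin m}
    (hij : i ≠ j) {H : Fin m → Fin m → ℂ} (hH : ∀ k l, H k l = H l k) :
    ∑ k, ∑ l, H k l *
      ((M.updateRow i (Pi.single k 1)).updateRow j (Pi.single l 1)).det = 0 := by
  have hanti : ∀ k l, ((M.updateRow i (Pi.single k 1)).updateRow j (Pi.single l 1)).det =
      -((M.updateRow i (Pi.single l 1)).updateRow j (Pi.single k 1)).det := fun k l => by
    have := Matrix.det_permute (Equiv.swap i j)
      ((M.updateRow i (Pi.single l 1)).updateRow j (Pi.single k 1))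
    rw [Equiv.Perm.sign_swap hij] at this
    simp only [Units.val_neg, Units.val_one, Int.cast_neg, Int.cast_one, neg_mul, one_mul] at this
    rw [← this]
    congr 1
    ext a b
    simp only [Matrix.submatrix_apply, Matrix.updateRow_apply, id]
    by_cases ha : a = j
    · subst ha; simp [hij]
    · by_cases hb : a = i
      · subst hb; simp [ha]
      · simp [Equiv.swap_apply_of_ne_of_ne hb ha, ha, hb]
  have h1 : ∑ k, ∑ l, H k l *
      ((M.updateRow i (Pi.single k 1)).updateRow j (Pi.single l 1)).det =
      -∑ k, ∑ l, H k l *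
      ((M.updateRow i (Pi.single k 1)).updateRow j (Pi.single l 1)).det := by
    conv_lhs => rw [Finset.sum_comm]
    rw [← Finset.sum_neg_distrib]
    refine Finset.sum_congr rfl fun k _ => ?_
    rw [← Finset.sum_neg_distrib]
    refine Finset.sum_congr rfl fun l _ => ?_
    rw [hanti l k, hH l k]
    ring
  exact self_eq_neg.1 h1

lemma hasFDerivAt_matrix_det {E : Type*} [NormedAddCommGroup E] [NormedSpace ℝ E]
    {M : E → Matrix (Fin m) (Fin m) ℂ} {M' : Fin m → Fin m → E →L[ℝ] ℂ} {x : E}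
    (hM : ∀ i j, HasFDerivAt (fun y => M y i j) (M' i j) x) :
    HasFDerivAt (fun y => (M y).det)
      (∑ j, ∑ l, ((M x).updateRow j (Pi.single l 1)).det • M' j l) x := by
  have key : ∀ j l, ((M x).updateRow j (Pi.single l 1)).det = ∑ σ : Equiv.Perm (Fin m),
      if σ l = j then ((Equiv.Perm.sign σ : ℤ) : ℂ) * ∏ i ∈ Finset.univ.erase l, M x (σ i) i
        else 0 := fun j l => by
    rw [Matrix.det_apply']
    refine Finset.sum_congr rfl fun σ _ => ?_
    rw [← Finset.mul_prod_erase _ _ (Finset.mem_univ l)]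
    split_ifs with h
    · subst h
      simp only [Matrix.updateRow_self, Pi.single_eq_same, one_mul]
      congr 1
      refine Finset.prod_congr rfl fun i hi => ?_
      rw [Matrix.updateRow_ne (σ.injective.ne (Finset.ne_of_mem_erase hi))]
    · have hne : σ.symm j ∈ Finset.univ.erase l :=
        Finset.mem_erase.2 ⟨fun h' => h (by rw [← h']; simp), Finset.mem_univ _⟩
      rw [Finset.prod_eq_zero hne, mul_zero, mul_zero]
      have : σ.symm j ≠ l := (Finset.mem_erase.1 hne).1
      simp [this]
  have h1 : ∀ σ : Equiv.Perm (Fin m), HasFDerivAt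
      (fun y => ((Equiv.Perm.sign σ : ℤ) : ℂ) * ∏ i, M y (σ i) i)
      (((Equiv.Perm.sign σ : ℤ) : ℂ) •
        ∑ i, (∏ k ∈ Finset.univ.erase i, M x (σ k) k) • M' (σ i) i) x := fun σ =>
    (HasFDerivAt.finsetProd fun i _ => hM (σ i) i).const_mul _
  simp only [Matrix.det_apply' (M _)]
  refine (HasFDerivAt.fun_sum fun σ _ => h1 σ).congr_fderiv ?_
  ext v
  simp only [sum_apply, smul_apply, smul_eq_mul, key,
    Finset.sum_mul, Finset.mul_sum]
  rw [Finset.sum_comm]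
  conv_rhs => rw [Finset.sum_comm]
  refine Finset.sum_congr rfl fun l _ => ?_
  conv_rhs => rw [Finset.sum_comm]
  refine Finset.sum_congr rfl fun σ _ => ?_
  simp [ite_mul, mul_assoc]

lemma partialDeriv_comm {f : (Fin m → ℝ) → ℂ} (hf : ContDiff ℝ 2 f) (i j : Fin m)
    (x : Fin m → ℝ) : partialDeriv i (partialDeriv j f) x = partialDeriv j (partialDeriv i f) x := by
  have hsymm : IsSymmSndFDerivAt ℝ f x := hf.contDiffAt.isSymmSndFDerivAt (by simp)
  have hd : DifferentiableAt ℝ (fderiv ℝ f) x :=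
    (hf.fderiv_right (m := 1) (by norm_num)).differentiable (by norm_num) x
  have : ∀ i j, partialDeriv i (partialDeriv j f) x =
      fderiv ℝ (fderiv ℝ f) x (Pi.single i 1) (Pi.single j 1) := fun i j => by
    have h := hd.hasFDerivAt.clm_apply (hasFDerivAt_const (Pi.single j (1 : ℝ)) x)
    have h' : fderiv ℝ (partialDeriv j f) x = _ := h.fderiv
    rw [partialDeriv, h']
    simp
  rw [this, this, hsymm]

/-- Piola's identity: the cofactor field is divergence free. -/
lemma sum_partialDeriv_cofactorField {F : Fin m → (Fin m → ℝ) → ℂ} (hF : ∀ j, ContDiff ℝ 2 (F j))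
    (i₀ : Fin m) (x : Fin m → ℝ) :
    ∑ i, partialDeriv i (fun y => cofactorField F i₀ y i) x = 0 := by
  have hd : ∀ j i, DifferentiableAt ℝ (fun y => jacobian F y j i) x := fun j i =>
    (contDiff_jacobian (k := 1) hF (by norm_num) j i).differentiable (by norm_num) x
  have h1 : ∀ i, partialDeriv i (fun y => cofactorField F i₀ y i) x =
      ∑ j ∈ Finset.univ.erase i₀, ∑ l, partialDeriv i (partialDeriv l (F j)) x *
        (((jacobian F x).updateRow i₀ (Pi.single i 1)).updateRow j (Pi.single l 1)).det := by
    intro i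
    have h2 := hasFDerivAt_matrix_det
      (M := fun y => (jacobian F y).updateRow i₀ (Pi.single i 1)) (x := x)
      (M' := fun j l => if j = i₀ then 0 else fderiv ℝ (fun y => jacobian F y j l) x)
      fun j l => by
        by_cases hj : j = i₀
        · subst hj
          simpa [Matrix.updateRow_apply] using hasFDerivAt_const _ x
        · simpa [Matrix.updateRow_apply, hj] using (hd j l).hasFDerivAt
    simp only [cofactorField, Matrix.adjugate_apply]
    rw [partialDeriv, h2.fderiv, ← Finset.add_sum_erase _ _ (Finset.mem_univ i₀)]
    simp only [add_apply, sum_apply,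
      smul_apply, if_true, zero_apply, smul_zero,
      Finset.sum_const_zero, zero_add]
    refine Finset.sum_congr rfl fun j hj => Finset.sum_congr rfl fun l _ => ?_
    rw [if_neg (Finset.ne_of_mem_erase hj), smul_eq_mul, mul_comm]
    rfl
  simp only [h1]
  rw [Finset.sum_comm]
  refine Finset.sum_eq_zero fun j hj => ?_
  exact Matrix.sum_det_updateRow_updateRow_eq_zero _ (Finset.ne_of_mem_erase hj).symm
    fun k l => partialDeriv_comm (hF j) k l x

end Cofactor

section ApproximateIntegral

variable {m : ℕ} {c : (Fin m → ℝ) → Fin m → ℂ} {f s : (Fin m → ℝ) → ℂ}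

/-- The truncated exponential `∑_{n ≤ N} (-s)ⁿ/n! Lⁿ f`, where `L` is the vector field with
coefficients `c`. -/
noncomputable def truncExp (c : (Fin m → ℝ) → Fin m → ℂ) (s : (Fin m → ℝ) → ℂ) (N : ℕ)
    (f : (Fin m → ℝ) → ℂ) (x : Fin m → ℝ) : ℂ :=
  ∑ n ∈ Finset.range (N + 1), (-s x) ^ n * ((n.factorial : ℂ)⁻¹ * (applyField c)^[n] f x)

lemma contDiff_iterate_applyField (hc : ContDiff ℝ ∞ c) (hf : ContDiff ℝ ∞ f) (n : ℕ) :
    ContDiff ℝ ∞ ((applyField c)^[n] f) := by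
  induction n with
  | zero => exact hf
  | succ n ih =>
    rw [Function.iterate_succ_apply']
    exact hc.applyField ih (by norm_num)

lemma contDiff_truncExp (hc : ContDiff ℝ ∞ c) (hs : ContDiff ℝ ∞ s) (hf : ContDiff ℝ ∞ f)
    (N : ℕ) : ContDiff ℝ ∞ (truncExp c s N f) :=
  ContDiff.sum fun n _ => (hs.neg.pow n).mul
    (contDiff_const.mul (contDiff_iterate_applyField hc hf n))

/-- If `L s = 1`, the truncated exponential solves `L w = 0` up to order `N` along `s = 0`. -/
lemma applyField_truncExp (hc : ContDiff ℝ ∞ c) (hs : ContDiff ℝ ∞ s) (hf : ContDiff ℝ ∞ f)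
    (hcs : ∀ x, applyField c s x = 1) (N : ℕ) (x : Fin m → ℝ) :
    applyField c (truncExp c s N f) x =
      (-s x) ^ N * ((N.factorial : ℂ)⁻¹ * (applyField c)^[N + 1] f x) := by
  have hdi : ∀ n, Differentiable ℝ ((applyField c)^[n] f) := fun n =>
    (contDiff_iterate_applyField hc hf n).differentiable (by norm_num)
  have hds : Differentiable ℝ s := hs.differentiable (by norm_num)
  induction N with
  | zero =>
    have : truncExp c s 0 f = f := by
      funext y
      simp [truncExp]
    simp [this]
  | succ N ih =>
    have h1 : truncExp c s (N + 1) f = fun y => truncExp c s N f y +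
        (-s y) ^ (N + 1) * (((N + 1).factorial : ℂ)⁻¹ * (applyField c)^[N + 1] f y) := by
      funext y
      rw [truncExp, Finset.sum_range_succ]
      rfl
    have h2 : applyField c (fun y => (-s y) ^ (N + 1)) x = -((N + 1 : ℕ) : ℂ) * (-s x) ^ N := by
      have h3 : HasDerivAt (fun z : ℂ => (-z) ^ (N + 1)) (-((N + 1 : ℕ) : ℂ) * (-s x) ^ N)
          (s x) := by
        refine ((hasDerivAt_neg (s x)).fun_pow (N + 1)).congr_deriv ?_
        simp only [Nat.add_sub_cancel]
        ring
      rw [applyField_comp h3 (hds x), hcs, mul_one]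
    have hf1 : ((N + 1).factorial : ℂ)⁻¹ * ((N + 1 : ℕ) : ℂ) = (N.factorial : ℂ)⁻¹ := by
      have : (N.factorial : ℂ) ≠ 0 := by exact_mod_cast N.factorial_ne_zero
      have : ((N : ℂ) + 1) ≠ 0 := by exact_mod_cast N.succ_ne_zero
      rw [Nat.factorial_succ]
      push_cast
      field_simp
    have hd1 : DifferentiableAt ℝ (fun y => (-s y) ^ (N + 1)) x := (hds.neg.pow _) x
    have hd2 := (hdi (N + 1) x).const_mul (((N + 1).factorial : ℂ)⁻¹)
    rw [h1, applyField_add ((contDiff_truncExp hc hs hf N).differentiable (by norm_num) x)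
      (hd1.fun_mul hd2), ih, applyField_mul hd1 hd2, h2,
      applyField_const_mul _ (hdi _ x), ← hf1, Function.iterate_succ_apply' _ (N + 1)]
    ring

/-- The truncated exponential has the same derivatives as `f` along the hypersurface `s = 0`. -/
lemma partialDeriv_truncExp (hc : ContDiff ℝ ∞ c) (hs : ContDiff ℝ ∞ s) (hf : ContDiff ℝ ∞ f)
    (N : ℕ) {i : Fin m} {x : Fin m → ℝ} (hsi : ∀ t : ℝ, s (x + t • Pi.single i 1) = 0) :
    partialDeriv i (truncExp c s N f) x = partialDeriv i f x := by
  rw [partialDeriv, partialDeriv,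
    ← ((contDiff_truncExp hc hs hf N).differentiable (by norm_num) x).lineDeriv_eq_fderiv,
    ← (hf.differentiable (by norm_num) x).lineDeriv_eq_fderiv, lineDeriv, lineDeriv]
  congr 1
  funext t
  rw [truncExp, hsi, Finset.sum_range_succ', Finset.sum_eq_zero fun n _ => by simp]
  simp

lemma truncExp_sub_isLittleO (hc : ContDiff ℝ ∞ c) (hs : ContDiff ℝ ∞ s) (hf : ContDiff ℝ ∞ f)
    (N : ℕ) {x : Fin m → ℝ} (hsx : s x = 0) (h0 : applyField c f x = 0)
    (h1 : fderiv ℝ (applyField c f) x = 0) :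
    (fun y => truncExp c s N f y - f y) =o[𝓝 x] fun y => ‖y - x‖ ^ 2 := by
  have hsO : s =O[𝓝 x] fun y => ‖y - x‖ := by
    have := (hs.differentiable (by norm_num) x).hasFDerivAt.isBigO_sub
    simp only [hsx, sub_zero] at this
    exact this.norm_right
  have hnorm : Tendsto (fun y : Fin m → ℝ => ‖y - x‖) (𝓝 x) (𝓝 0) := by
    have : Continuous fun y : Fin m → ℝ => ‖y - x‖ := by fun_prop
    simpa using this.tendsto x
  have hL1 : (applyField c f) =o[𝓝 x] fun y => ‖y - x‖ := by
    have := hasFDerivAt_iff_isLittleO.1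
      ((hc.applyField hf (k := ∞) (by norm_num)).differentiable (by norm_num) x).hasFDerivAt
    simp only [h0, h1, sub_zero, zero_apply] at this
    exact this.norm_right
  have hterm : ∀ n, (fun y => (-s y) ^ (n + 1) * ((((n + 1).factorial : ℂ))⁻¹ *
      (applyField c)^[n + 1] f y)) =o[𝓝 x] fun y => ‖y - x‖ ^ 2 := by
    intro n
    have hcont := (contDiff_iterate_applyField hc hf (n + 1)).continuous.continuousAt (x := x)
    rcases n with _ | _ | n
    · have := hsO.neg_left.mul_isLittleO (hL1.const_mul_left ((Nat.factorial 1 : ℂ)⁻¹))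
      simpa [sq] using this
    · have h2 : (fun y => ((Nat.factorial 2 : ℂ))⁻¹ * (applyField c)^[2] f y) =o[𝓝 x]
          fun _ => (1 : ℝ) := by
        refine ((Asymptotics.isLittleO_one_iff ℝ).2 ?_).const_mul_left _
        have h3 : (applyField c)^[2] f x = 0 := by
          show applyField c (applyField c f) x = 0
          rw [applyField]
          simp [partialDeriv, h1]
        rw [← h3]
        exact hcont.tendsto
      have := (hsO.neg_left.pow 2).mul_isLittleO h2
      simpa using this
    · have h2 : (fun y => (((n + 3).factorial : ℂ))⁻¹ * (applyField c)^[n + 3] f y) =O[𝓝 x]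
          fun _ => (1 : ℝ) := (hcont.tendsto.isBigO_one ℝ).const_mul_left _
      have h3 := (hsO.neg_left.pow (n + 3)).mul h2
      refine h3.trans_isLittleO ?_
      have h4 : (fun y : Fin m → ℝ => ‖y - x‖ ^ (n + 1)) =o[𝓝 x] fun _ => (1 : ℝ) := by
        rw [Asymptotics.isLittleO_one_iff]
        simpa using hnorm.pow (n + 1)
      have h5 := h4.mul_isBigO (Asymptotics.isBigO_refl (fun y : Fin m → ℝ => ‖y - x‖ ^ 2) (𝓝 x))
      refine (h5.congr_left fun y => ?_).congr_right fun y => ?_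
      · ring
      · ring
  have hsum := Asymptotics.IsLittleO.sum (s := Finset.range N) fun n _ => hterm n
  refine hsum.congr_left fun y => ?_
  rw [truncExp, Finset.sum_range_succ']
  simp

end ApproximateIntegral

section SmallPerturbation

variable {m : ℕ}

lemma exists_contDiff_mul_eq_one {f : (Fin m → ℝ) → ℂ} (hf : ContDiff ℝ ∞ f) {p : Fin m → ℝ}
    (hp : f p ≠ 0) : ∃ θ : (Fin m → ℝ) → ℂ, ContDiff ℝ ∞ θ ∧ ∀ᶠ x in 𝓝 p, θ x * f x = 1 := by
  have hne : ∀ᶠ x in 𝓝 p, f x ≠ 0 := hf.continuous.continuousAt.eventually_ne hp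
  obtain ⟨r, hr, hball⟩ := Metric.eventually_nhds_iff_ball.1 hne
  let χ : ContDiffBump p := ⟨r / 4, r / 2, by positivity, by linarith⟩
  refine ⟨fun x => (χ x : ℂ) * (f x)⁻¹, contDiff_iff_contDiffAt.2 fun x => ?_, ?_⟩
  · by_cases hx : x ∈ tsupport χ
    · rw [χ.tsupport_eq] at hx
      have hx' : f x ≠ 0 := hball x (Metric.closedBall_subset_ball (half_lt_self hr) hx)
      exact (ofRealCLM.contDiff.comp χ.contDiff).contDiffAt.mul (hf.contDiffAt.inv hx')
    · refine (contDiffAt_const (c := (0 : ℂ))).congr_of_eventuallyEq ?_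
      filter_upwards [notMem_tsupport_iff_eventuallyEq.1 hx] with y hy
      simp [hy]
  · filter_upwards [χ.eventuallyEq_one, hne] with x h1 h2
    simp [h1, h2]

variable {E F : Type*} [NormedAddCommGroup E] [NormedSpace ℝ E] [NormedAddCommGroup F]
  [NormedSpace ℝ F]

/-- `f` is smooth, of `C^h`-norm less than `ε`. -/
def IsSmall (h : ℕ) (ε : ℝ) (f : E → F) : Prop :=
  ContDiff ℝ ∞ f ∧ ∀ x, ∀ j ≤ h, ‖iteratedFDeriv ℝ j f x‖ < ε

lemma IsSmall.add {h : ℕ} {ε δ : ℝ} {f g : E → F} (hf : IsSmall h ε f) (hg : IsSmall h δ g) :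
    IsSmall h (ε + δ) (f + g) := by
  refine ⟨hf.1.add hg.1, fun x j hj => ?_⟩
  rw [iteratedFDeriv_add_apply (hf.1.contDiffAt.of_le (by exact_mod_cast le_top))
    (hg.1.contDiffAt.of_le (by exact_mod_cast le_top))]
  exact (norm_add_le _ _).trans_lt (add_lt_add (hf.2 x j hj) (hg.2 x j hj))

lemma exists_isSmall_smul_ne {f : E → F} (hf : ContDiff ℝ ∞ f) (hfs : HasCompactSupport f) (h : ℕ)
    {ε : ℝ} (hε : 0 < ε) (A : ℂ) {B : ℂ} (hB : B ≠ 0) :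
    ∃ η : ℝ, A + η * B ≠ 0 ∧ IsSmall h ε fun x => η • f x := by
  obtain ⟨η₀, hη₀, hη⟩ := exists_forall_norm_iteratedFDeriv_smul_lt hf hfs h hε
  by_cases hA : A = 0
  · exact ⟨η₀, by simp [hA, hB, hη₀.ne'], hf.const_smul _, hη _ (abs_of_pos hη₀).le⟩
  · exact ⟨0, by simp [hA], hf.const_smul _, hη 0 (by simpa using hη₀.le)⟩

/-- A field that is flat to order `h` along a hyperplane can be localized with small `C^h`-norm. -/
lemma exists_isSmall_eq_pow_smul {G : E → F} (hG : ContDiff ℝ ∞ G) (hGs : HasCompactSupport G)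
    (s : E →L[ℝ] ℝ) (p : E) (h : ℕ) {ε : ℝ} (hε : 0 < ε) :
    ∃ V : E → F, IsSmall h ε V ∧ ∀ᶠ x in 𝓝 p, V x = s (x - p) ^ (h + 1) • G x := by
  let χ : ContDiffBump (0 : ℝ) := ⟨1, 2, one_pos, one_lt_two⟩
  let k : ℝ → ℝ := fun t => χ t * t ^ (h + 1)
  have hk : ContDiff ℝ ∞ k := χ.contDiff.mul (contDiff_id.pow _)
  have hks : HasCompactSupport k := χ.hasCompactSupport.mul_right
  obtain ⟨K, hK0, hK⟩ := exists_bound_iteratedFDeriv hk hks h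
  obtain ⟨K', hK0', hK'⟩ := exists_bound_iteratedFDeriv hG hGs h
  set D : ℝ := 2 ^ h * (K * (1 + ‖s‖) ^ h) * K' with hD
  have hD0 : 0 < D := by positivity
  set δ : ℝ := min 1 (ε / (2 * D)) with hδ
  have hδ0 : 0 < δ := by positivity
  have hδ1 : δ ≤ 1 := min_le_left _ _
  let ℓ : E →L[ℝ] ℝ := δ⁻¹ • s
  let g : E → ℝ := fun x => δ ^ (h + 1) * k (ℓ (x - p))
  have hg : ContDiff ℝ ∞ g :=
    contDiff_const.mul (hk.comp (ℓ.contDiff.comp (contDiff_id.sub contDiff_const)))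
  have hgb : ∀ x, ∀ j ≤ h, ‖iteratedFDeriv ℝ j g x‖ ≤ δ * (K * (1 + ‖s‖) ^ h) := by
    intro x j hj
    have h1 : iteratedFDeriv ℝ j g x = δ ^ (h + 1) • iteratedFDeriv ℝ j (k ∘ ℓ) (x - p) := by
      have h2 : g = fun y => δ ^ (h + 1) • (k ∘ ℓ) (y - p) := rfl
      have h3 : ContDiff ℝ ∞ fun y => (k ∘ ℓ) (y - p) :=
        (hk.comp ℓ.contDiff).comp (contDiff_id.sub contDiff_const)
      rw [h2, iteratedFDeriv_const_smul_apply' (h3.contDiffAt.of_le (by exact_mod_cast le_top)),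
        iteratedFDeriv_comp_sub]
    have h3 : ‖iteratedFDeriv ℝ j (k ∘ ℓ) (x - p)‖ ≤ K * ‖ℓ‖ ^ j := by
      rw [ℓ.iteratedFDeriv_comp_right hk _ (by exact_mod_cast le_top)]
      refine (ContinuousMultilinearMap.norm_compContinuousLinearMap_le _ _).trans ?_
      rw [Finset.prod_const, Finset.card_univ, Fintype.card_fin]
      gcongr
      exact hK j hj _
    have h4 : ‖ℓ‖ = δ⁻¹ * ‖s‖ := by
      rw [norm_smul, norm_inv, Real.norm_eq_abs, abs_of_pos hδ0]
    rw [h1, norm_smul, norm_pow, Real.norm_eq_abs, abs_of_pos hδ0]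
    calc δ ^ (h + 1) * ‖iteratedFDeriv ℝ j (k ∘ ℓ) (x - p)‖
        ≤ δ ^ (h + 1) * (K * (δ⁻¹ * ‖s‖) ^ j) := by rw [← h4]; gcongr
      _ = δ ^ (h + 1 - j) * (K * ‖s‖ ^ j) := by
          rw [mul_pow, inv_pow, pow_sub₀ _ hδ0.ne' (by omega)]
          ring
      _ ≤ δ ^ 1 * (K * (1 + ‖s‖) ^ h) := by
          refine mul_le_mul (pow_le_pow_of_le_one hδ0.le hδ1 (by omega)) ?_ (by positivity)
            (by positivity)
          gcongr
          calc ‖s‖ ^ j ≤ (1 + ‖s‖) ^ j := by gcongr; linarith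
            _ ≤ (1 + ‖s‖) ^ h := pow_le_pow_right₀ (by linarith [norm_nonneg s]) hj
      _ = δ * (K * (1 + ‖s‖) ^ h) := by rw [pow_one]
  refine ⟨fun x => g x • G x, ⟨hg.smul hG, fun x j hj => ?_⟩, ?_⟩
  · refine (norm_iteratedFDeriv_smul_le hg hG x (by exact_mod_cast le_top)).trans_lt ?_
    calc ∑ i ∈ Finset.range (j + 1), (j.choose i : ℝ) * ‖iteratedFDeriv ℝ i g x‖ *
          ‖iteratedFDeriv ℝ (j - i) G x‖
        ≤ ∑ i ∈ Finset.range (j + 1), (j.choose i : ℝ) * (δ * (K * (1 + ‖s‖) ^ h)) * K' := by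
          refine Finset.sum_le_sum fun i hi => ?_
          have := Finset.mem_range.1 hi
          gcongr
          exacts [hgb x i (by omega), hK' _ (by omega) x]
      _ = 2 ^ j * (δ * (K * (1 + ‖s‖) ^ h)) * K' := by
          rw [← Finset.sum_mul, ← Finset.sum_mul]
          congr 2
          exact_mod_cast Nat.sum_range_choose j
      _ ≤ 2 ^ h * (δ * (K * (1 + ‖s‖) ^ h)) * K' := by
          gcongr
          norm_num
      _ = δ * D := by rw [hD]; ring
      _ ≤ ε / (2 * D) * D := by gcongr; exact min_le_right _ _
      _ = ε / 2 := by field_simp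
      _ < ε := by linarith
  · have h1 : Tendsto (fun x => ℓ (x - p)) (𝓝 p) (𝓝 0) := by
      have : Continuous fun x => ℓ (x - p) := by fun_prop
      simpa using this.tendsto p
    filter_upwards [h1.eventually χ.eventuallyEq_one] with x hx
    show (δ ^ (h + 1) * (χ (ℓ (x - p)) * (ℓ (x - p)) ^ (h + 1))) • G x = _
    rw [hx]
    congr 1
    simp only [Pi.one_apply, one_mul, ℓ, smul_apply, smul_eq_mul]
    rw [mul_pow, ← mul_assoc, ← mul_pow, mul_inv_cancel₀ hδ0.ne', one_pow, one_mul]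

end SmallPerturbation

section CriticalPerturbation

variable {m : ℕ}

/-- There are `C^h`-small perturbations of `a` for which every solution is critical at `p`. -/
def HasCriticalPerturbation (h : ℕ) (p : Fin m → ℝ) (a : (Fin m → ℝ) → Fin m → ℂ) : Prop :=
  ∀ ε > 0, ∃ V, IsSmall h ε V ∧ ∀ u : (Fin m → ℝ) → ℂ, ContDiff ℝ 1 u →
    (∀ᶠ x in 𝓝 p, applyField (a + V) u x = 0) → fderiv ℝ u p = 0

lemma HasCriticalPerturbation.of_isSmall {h : ℕ} {p : Fin m → ℝ} {a : (Fin m → ℝ) → Fin m → ℂ}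
    (H : ∀ ε > 0, ∃ V, IsSmall h ε V ∧ HasCriticalPerturbation h p (a + V)) :
    HasCriticalPerturbation h p a := by
  intro ε hε
  obtain ⟨V, hV, hVa⟩ := H (ε / 2) (by positivity)
  obtain ⟨V', hV', hu⟩ := hVa (ε / 2) (by positivity)
  refine ⟨V + V', ?_, fun u hu1 hsol => hu u hu1 ?_⟩
  · simpa using hV.add hV'
  · simpa [add_assoc] using hsol

lemma partialDeriv_clm (f : (Fin m → ℝ) →L[ℝ] ℂ) (p : Fin m → ℝ) (i : Fin m) (x : Fin m → ℝ) :
    partialDeriv i (fun y => f (y - p)) x = f (Pi.single i 1) := by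
  have h : HasFDerivAt (fun y => f (y - p)) f x := by
    exact f.hasFDerivAt.comp x ((hasFDerivAt_id x).sub_const p)
  rw [partialDeriv, h.fderiv]

/-- A field with a normalized approximate first integral of order two whose imaginary part has a
nondegenerate minimum. -/
theorem hasCriticalPerturbation_of_jet {a : (Fin m → ℝ) → Fin m → ℂ} (ha : ContDiff ℝ ∞ a)
    {p : Fin m → ℝ} {i₀ i₂ : Fin m} (hi : i₂ ≠ i₀) (ha0 : a p i₀ ≠ 0) {W : (Fin m → ℝ) → ℂ}
    (hW : ContDiff ℝ ∞ W) (hW0 : (W p).im = 0) (hLW : applyField a W p = 0)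
    (hLW' : fderiv ℝ (applyField a W) p = 0) (hWi : (partialDeriv i₂ W p).re ≠ 0) {κ : ℝ}
    (hκ : 0 < κ) (hWκ : ∀ x, κ * ‖x - p‖ ^ 2 ≤ (W x).im) (h : ℕ) :
    HasCriticalPerturbation h p a := by
  have hai : ∀ i, ContDiff ℝ ∞ fun x => a x i := contDiff_pi.1 ha
  obtain ⟨θ, hθ, hθa⟩ := exists_contDiff_mul_eq_one (hai i₀) ha0
  let π : Fin m → (Fin m → ℝ) →L[ℝ] ℂ := fun j =>
    ofRealCLM.comp (ContinuousLinearMap.proj (R := ℝ) (φ := fun _ : Fin m => ℝ) j)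
  have hπ : ∀ j i, π j (Pi.single i 1) = if j = i then 1 else 0 := fun j i => by
    simp [π, Pi.single_apply, apply_ite]
  let X : Fin m → (Fin m → ℝ) → ℂ := fun j x => π j (x - p)
  have hX : ∀ j, ContDiff ℝ ∞ (X j) := fun j =>
    (π j).contDiff.comp (contDiff_id.sub contDiff_const)
  have hXi : ∀ j i x, partialDeriv i (X j) x = if j = i then 1 else 0 := fun j i x => by
    rw [← hπ, ← partialDeriv_clm (π j) p i x]
  let c : (Fin m → ℝ) → Fin m → ℂ := fun x i => if i = i₀ then 1 else θ x * a x i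
  have hc : ContDiff ℝ ∞ c := contDiff_pi.2 fun i => by
    by_cases h' : i = i₀
    · simpa [c, h'] using contDiff_const
    · simpa [c, h'] using hθ.mul (hai i)
  set s := X i₀ with hs_def
  have hs : ContDiff ℝ ∞ s := hX i₀
  have hcs : ∀ x, applyField c s x = 1 := fun x => by
    simp [applyField, hs_def, hXi, c]
  have hac : ∀ᶠ x in 𝓝 p, ∀ f, applyField c f x = θ x * applyField a f x := by
    filter_upwards [hθa] with x hx f
    rw [applyField, applyField, Finset.mul_sum]
    refine Finset.sum_congr rfl fun i _ => ?_
    by_cases h' : i = i₀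
    · subst h'
      simp [c, ← mul_assoc, hx]
    · simp [c, h', mul_assoc]
  have hcW : applyField c W p = 0 := by rw [hac.self_of_nhds, hLW, mul_zero]
  have hcW' : fderiv ℝ (applyField c W) p = 0 := by
    have h1 : applyField c W =ᶠ[𝓝 p] fun x => θ x * applyField a W x := by
      filter_upwards [hac] with x hx using hx W
    rw [h1.fderiv_eq, fderiv_fun_mul (hθ.differentiable (by norm_num) p)
      ((ha.applyField hW (k := ∞) (by norm_num)).differentiable (by norm_num) p), hLW, hLW']
    ext v
    show θ p * 0 + 0 * fderiv ℝ θ p v = 0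
    ring
  let f : Fin m → (Fin m → ℝ) → ℂ := fun j => if j = i₂ then W else X j
  have hf : ∀ j, ContDiff ℝ ∞ (f j) := fun j => by
    by_cases h' : j = i₂
    · simpa [f, h'] using hW
    · simpa [f, h'] using hX j
  let F : Fin m → (Fin m → ℝ) → ℂ := fun j => if j = i₀ then s else truncExp c s (h + 1) (f j)
  have hF : ∀ j, ContDiff ℝ ∞ (F j) := fun j => by
    by_cases h' : j = i₀
    · simpa [F, h'] using hs
    · simpa [F, h'] using contDiff_truncExp hc hs (hf j) (h + 1)
  let R : Fin m → (Fin m → ℝ) → ℂ := fun j x => if j = i₀ then 0 else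
    (-1) ^ (h + 1) * (((h + 1).factorial : ℂ)⁻¹ * (applyField c)^[h + 2] (f j) x)
  have hR : ∀ j, ContDiff ℝ ∞ (R j) := fun j => by
    by_cases h' : j = i₀
    · simpa [R, h'] using contDiff_const
    · simpa [R, h'] using contDiff_const.mul
        (contDiff_const.mul (contDiff_iterate_applyField hc (hf j) (h + 2)))
  have hLF : ∀ j x, applyField c (F j) x = (if j = i₀ then 1 else 0) + s x ^ (h + 1) * R j x := by
    intro j x
    by_cases h' : j = i₀
    · simp [F, R, h', hcs]
    · simp only [F, R, h', if_false, zero_add]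
      rw [applyField_truncExp hc hs (hf j) hcs, neg_pow]
      ring
  have hM : ∀ j i, ContDiff ℝ ∞ fun x => jacobian F x j i :=
    contDiff_jacobian hF (by norm_num)
  have hF2 : F i₂ = truncExp c s (h + 1) W := by simp [F, f, hi]
  have hFi : ∀ j i, i ≠ i₀ → partialDeriv i (F j) p = partialDeriv i (f j) p ∨ j = i₀ := by
    intro j i hii
    by_cases h' : j = i₀
    · exact Or.inr h'
    · refine Or.inl ?_
      simp only [F, h', if_false]
      refine partialDeriv_truncExp hc hs (hf j) _ fun t => ?_
      simp [hs_def, X, π, hii.symm]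
  have hdet : (jacobian F p).det ≠ 0 := by
    intro h0
    obtain ⟨v, hv0, hv⟩ := Matrix.exists_mulVec_eq_zero_iff.2 h0
    have hvj : ∀ j, ∑ i, partialDeriv i (F j) p * v i = 0 := fun j => congrFun hv j
    have hvi₀ : v i₀ = 0 := by
      simpa [F, hs_def, hXi] using hvj i₀
    have hvf : ∀ j, j ≠ i₀ → ∑ i, partialDeriv i (f j) p * v i = 0 := fun j hj => by
      rw [← hvj j]
      refine Finset.sum_congr rfl fun i _ => ?_
      by_cases h' : i = i₀
      · simp [h', hvi₀]
      · rw [(hFi j i h').resolve_right hj]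
    have hvne : ∀ j, j ≠ i₂ → v j = 0 := fun j hj => by
      by_cases h' : j = i₀
      · rw [h', hvi₀]
      · simpa [f, hj, hXi] using hvf j h'
    refine hv0 (funext fun j => ?_)
    by_cases h' : j = i₂
    · have h1 := hvf i₂ hi
      rw [Finset.sum_eq_single i₂ (fun i _ hne => by rw [hvne i hne, mul_zero]) (by simp)] at h1
      have h2 : partialDeriv i₂ W p ≠ 0 := fun h3 => hWi (by rw [h3, zero_re])
      simpa [f, h', h2] using h1
    · exact hvne j h'
  have hdetC : ContDiff ℝ ∞ fun x => (jacobian F x).det := ContDiff.matrix_det hM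
  obtain ⟨μ, hμ, hμdet⟩ := exists_contDiff_mul_eq_one hdetC hdet
  let E : (Fin m → ℝ) → Fin m → ℂ := fun x i =>
    -(μ x * a x i₀ * ∑ j, (jacobian F x).adjugate i j * R j x)
  have hE : ContDiff ℝ ∞ E := contDiff_pi.2 fun i =>
    ((hμ.mul (hai i₀)).mul (ContDiff.sum fun j _ =>
      (ContDiff.matrix_adjugate hM i j).mul (hR j))).neg
  let χ : ContDiffBump p := ⟨1, 2, one_pos, one_lt_two⟩
  intro ε hε
  obtain ⟨V, hV, hVE⟩ := exists_isSmall_eq_pow_smul (G := fun x => χ x • E x)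
    (χ.contDiff.smul hE) χ.hasCompactSupport.smul_right
    (ContinuousLinearMap.proj (R := ℝ) (φ := fun _ : Fin m => ℝ) i₀) p h
    (show 0 < ε / 2 by positivity)
  have hV' : ∀ᶠ x in 𝓝 p, ∀ i, V x i = s x ^ (h + 1) * E x i := by
    filter_upwards [hVE, χ.eventuallyEq_one] with x hx h1 i
    rw [hx, h1]
    simp [hs_def, X, π]
  have hC1 : ContDiff ℝ ∞ (cofactorField F i₀) := contDiff_pi.2 fun i =>
    ContDiff.matrix_adjugate hM i i₀
  have hCJ : ∀ᶠ x in 𝓝 p, ∀ i, cofactorField F i₀ x i =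
      (θ x * (jacobian F x).det) * (a + V) x i := by
    filter_upwards [hac, hθa, hμdet, hV'] with x hx1 hx2 hx3 hx4 i
    have hMa : ∀ j, ∑ k, jacobian F x j k * a x k =
        a x i₀ * ((if j = i₀ then 1 else 0) + s x ^ (h + 1) * R j x) := fun j => by
      have h1 : ∑ k, jacobian F x j k * a x k = applyField a (F j) x :=
        Finset.sum_congr rfl fun k _ => mul_comm _ _
      rw [h1, ← hLF, hx1, ← mul_assoc, mul_comm (a x i₀), hx2, one_mul]
    have hadj : (jacobian F x).det * a x i = a x i₀ * (cofactorField F i₀ x i +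
        s x ^ (h + 1) * ∑ j, (jacobian F x).adjugate i j * R j x) := by
      have h1 := congrFun (congrArg (fun A => Matrix.mulVec A (a x))
        (Matrix.adjugate_mul (jacobian F x))) i
      simp only [← Matrix.mulVec_mulVec, Matrix.smul_mulVec, Matrix.one_mulVec, Pi.smul_apply,
        smul_eq_mul] at h1
      rw [← h1]
      simp only [Matrix.mulVec, dotProduct, hMa, mul_add, Finset.sum_add_distrib, mul_ite, mul_one,
        mul_zero, Finset.sum_ite_eq', Finset.mem_univ, if_true, cofactorField, Finset.mul_sum]
      congr 1
      · ring
      · exact Finset.sum_congr rfl fun j _ => by ring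
    rw [Pi.add_apply, Pi.add_apply, hx4 i, mul_assoc, mul_add, hadj]
    simp only [E]
    linear_combination (-cofactorField F i₀ x i) * hx2 + (s x ^ (h + 1) * (θ x * a x i₀) *
      ∑ j, (jacobian F x).adjugate i j * R j x) * hx3
  have hlo := truncExp_sub_isLittleO hc hs hW (h + 1) (x := p) (by simp [hs_def, X]) hcW hcW'
  have hwκ : ∀ᶠ x in 𝓝 p, κ / 2 * ‖x - p‖ ^ 2 ≤ (F i₂ x).im := by
    filter_upwards [hlo.def (show 0 < κ / 2 by positivity)] with x hx
    have h1 := (abs_im_le_norm _).trans hx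
    rw [Real.norm_of_nonneg (by positivity), abs_le, sub_im] at h1
    rw [hF2]
    linarith [h1.1, hWκ x]
  have hw0 : (F i₂ p).im = 0 := by
    have h1 : truncExp c s (h + 1) W p - W p = 0 := by
      have := hlo.def (show (0 : ℝ) < 1 by norm_num) |>.self_of_nhds
      simpa using this
    rw [hF2, sub_eq_zero.1 h1, hW0]
  have he : (fderiv ℝ (F i₂) p ((partialDeriv i₂ W p).re⁻¹ • Pi.single i₂ 1)).re = 1 := by
    have h1 : fderiv ℝ (F i₂) p (Pi.single i₂ 1) = partialDeriv i₂ W p := by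
      have := (hFi i₂ i₂ hi).resolve_right hi
      simpa [f, partialDeriv] using this
    rw [map_smul, h1, real_smul, re_ofReal_mul, inv_mul_cancel₀ hWi]
  obtain ⟨V', hV's, hV'b, hu⟩ := exists_perturbation_fderiv_eq_zero (a := a + V)
    (C := cofactorField F i₀) (hC1.of_le (by norm_num))
    (sum_partialDeriv_cofactorField (fun j => (hF j).of_le (by norm_cast)) i₀)
    (w := F i₂) ((hF i₂).of_le (by norm_num))
    (fun x => by rw [applyField_cofactorField, if_neg hi])
    (hθ.continuous.mul hdetC.continuous).continuousAt
    (mul_ne_zero (left_ne_zero_of_mul_eq_one hθa.self_of_nhds) hdet) hCJ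
    (show 0 < κ / 2 by positivity) hwκ hw0 he h (show 0 < ε / 2 by positivity)
  refine ⟨V + V', by simpa using hV.add (g := V') ⟨hV's, hV'b⟩, fun u hu1 hsol => hu u hu1 ?_⟩
  simpa [add_assoc] using hsol

end CriticalPerturbation

section Jets

variable {m : ℕ}

lemma sum_mul_single (f : (Fin m → ℝ) →L[ℝ] ℂ) (b : Fin m → ℂ) :
    ∑ i, b i * f (Pi.single i 1) = f (fun i => (b i).re) + I * f (fun i => (b i).im) := by
  have h : ∀ v : Fin m → ℝ, f v = ∑ i, (v i : ℂ) * f (Pi.single i 1) := fun v => by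
    conv_lhs => rw [pi_eq_sum_univ' v]
    rw [map_sum]
    refine Finset.sum_congr rfl fun i _ => ?_
    rw [map_smul, real_smul]
  rw [h fun i => (b i).re, h fun i => (b i).im, Finset.mul_sum, ← Finset.sum_add_distrib]
  refine Finset.sum_congr rfl fun i _ => ?_
  conv_lhs => rw [← re_add_im (b i)]
  ring

lemma applyField_clm (c : (Fin m → ℝ) → Fin m → ℂ) (f : (Fin m → ℝ) →L[ℝ] ℂ) (p x : Fin m → ℝ) :
    applyField c (fun y => f (y - p)) x = ∑ i, c x i * f (Pi.single i 1) :=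
  Finset.sum_congr rfl fun i _ => by rw [partialDeriv_clm]

/-- The conditions on the two-jet `f + B` of a function at `p` for the function to be a solution
to second order. -/
lemma applyField_jet {c : (Fin m → ℝ) → Fin m → ℂ} (hc : ContDiff ℝ ∞ c) {p P Q : Fin m → ℝ}
    (hP : ∀ i, (c p i).re = P i) (hQ : ∀ i, (c p i).im = Q i) (f : (Fin m → ℝ) →L[ℝ] ℂ)
    (B : (Fin m → ℝ) →L[ℝ] (Fin m → ℝ) →L[ℝ] ℂ) (hf : f P + I * f Q = 0)
    (hB : ∀ v, fderiv ℝ (applyField c fun y => f (y - p)) p v + (B v P + B P v) +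
      I * (B v Q + B Q v) = 0) :
    applyField c (fun y => f (y - p) + B (y - p) (y - p)) p = 0 ∧
      fderiv ℝ (applyField c fun y => f (y - p) + B (y - p) (y - p)) p = 0 := by
  have hP' : (fun i => (c p i).re) = P := funext hP
  have hQ' : (fun i => (c p i).im) = Q := funext hQ
  let D : (Fin m → ℝ) →L[ℝ] (Fin m → ℝ) →L[ℝ] ℂ := B + B.flip
  have hDB : ∀ v w, D v w = B v w + B w v := fun v w => rfl
  have hdB : ∀ x, HasFDerivAt (fun y => B (y - p) (y - p)) (D (x - p)) x := fun x => by
    have h1 : HasFDerivAt (fun y : Fin m → ℝ => y - p) (ContinuousLinearMap.id ℝ _) x :=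
      (hasFDerivAt_id x).sub_const p
    refine (B.hasFDerivAt_of_bilinear h1 h1).congr_fderiv ?_
    ext v
    rfl
  have hdf : ∀ x, DifferentiableAt ℝ (fun y => f (y - p)) x := fun x =>
    f.differentiableAt.comp x (differentiableAt_id.sub_const p)
  have hW : (applyField c fun y => f (y - p) + B (y - p) (y - p)) =
      fun x => applyField c (fun y => f (y - p)) x + ∑ i, c x i * D (x - p) (Pi.single i 1) := by
    funext x
    rw [applyField_add (hdf x) (hdB x).differentiableAt]
    congr 1
    refine Finset.sum_congr rfl fun i _ => ?_
    rw [partialDeriv, (hdB x).fderiv]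
  have hfs : ContDiff ℝ ∞ fun y => f (y - p) := f.contDiff.comp (contDiff_id.sub contDiff_const)
  refine ⟨?_, ?_⟩
  · rw [hW]
    simp only [sub_self, map_zero, zero_apply, mul_zero, Finset.sum_const_zero, add_zero]
    rw [applyField_clm, sum_mul_single, hP', hQ', hf]
  · have h1 : HasFDerivAt (applyField c fun y => f (y - p))
        (fderiv ℝ (applyField c fun y => f (y - p)) p) p :=
      ((hc.applyField hfs (k := ∞) (by norm_num)).differentiable (by norm_num) p).hasFDerivAt
    have h2 : ∀ i, HasFDerivAt (fun x => c x i * D (x - p) (Pi.single i 1))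
        (c p i • D.flip (Pi.single i 1)) p := fun i => by
      have h3 : HasFDerivAt (fun x => D (x - p) (Pi.single i 1)) (D.flip (Pi.single i 1)) p :=
        (D.flip (Pi.single i 1)).hasFDerivAt.comp p ((hasFDerivAt_id p).sub_const p)
      have h4 := ((contDiff_pi.1 hc i).differentiable (by norm_num) p).hasFDerivAt.mul h3
      refine h4.congr_fderiv ?_
      ext v
      simp
    rw [hW, (h1.fun_add (HasFDerivAt.fun_sum fun i _ => h2 i)).fderiv]
    ext v
    have h5 := sum_mul_single (D v) (c p)
    rw [hP', hQ', hDB, hDB] at h5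
    have h6 : (∑ i, c p i • D.flip (Pi.single i 1)) v = ∑ i, c p i * D v (Pi.single i 1) := by
      simp
    rw [add_apply, h6, h5, zero_apply, ← hB v]
    ring

lemma exists_forall_le_im_quadratic {a K : ℝ} (ha : 0 < a) :
    ∃ T : ℝ, 0 ≤ T ∧ ∀ s t y N : ℝ, |N| ≤ K * y * (|s| + |t|) →
      a / 2 * (s ^ 2 + t ^ 2) + y ^ 2 ≤ a * (s ^ 2 + t ^ 2) - N / 2 + T * y ^ 2 := by
  refine ⟨K ^ 2 / (4 * a) + 1, by positivity, fun s t y N hN => ?_⟩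
  have h1 : ∀ s : ℝ, K * y * |s| / 2 ≤ a / 2 * s ^ 2 + K ^ 2 / (8 * a) * y ^ 2 := fun s => by
    have h2 : 0 ≤ (2 * a * |s| - K * y) ^ 2 / (8 * a) := by positivity
    have h3 : (2 * a * |s| - K * y) ^ 2 / (8 * a) =
        a / 2 * s ^ 2 - K * y * |s| / 2 + K ^ 2 / (8 * a) * y ^ 2 := by
      rw [← sq_abs s]
      field_simp
      ring
    linarith
  have h4 : K ^ 2 / (4 * a) * y ^ 2 = 2 * (K ^ 2 / (8 * a) * y ^ 2) := by
    field_simp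
    ring
  nlinarith [h1 s, h1 t, le_abs_self N]

lemma exists_bilinear_im_pos {P Q : Fin m → ℝ} {S T : (Fin m → ℝ) →L[ℝ] ℝ} (hSP : S P = 1)
    (hSQ : S Q = 0) (hTP : T P = 0) (hTQ : T Q = 1) {l : (Fin m → ℝ) →L[ℝ] ℂ}
    (hl : (l P - I * l Q).im < 0) :
    ∃ B : (Fin m → ℝ) →L[ℝ] (Fin m → ℝ) →L[ℝ] ℂ,
      (∀ v, l v + (B v P + B P v) + I * (B v Q + B Q v) = 0) ∧
        ∃ κ > 0, ∀ v, κ * ‖v‖ ^ 2 ≤ (B v v).im := by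
  set α : ℂ := (l P - I * l Q) / 2 with hα
  set β : ℂ := (l P + I * l Q) / 2 with hβ
  have hαim : 0 < -α.im / 2 := by
    have : α.im = (l P - I * l Q).im / 2 := by
      rw [hα, show (2 : ℂ) = ((2 : ℝ) : ℂ) by norm_num, div_ofReal_im]
    linarith
  let Y : (Fin m → ℝ) →L[ℝ] (Fin m → ℝ) :=
    ContinuousLinearMap.id ℝ _ - S.smulRight P - T.smulRight Q
  have hY : ∀ v, Y v = v - S v • P - T v • Q := fun v => rfl
  have hYP : Y P = 0 := by simp [hY, hSP, hTP]
  have hYQ : Y Q = 0 := by simp [hY, hSQ, hTQ]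
  have hlY : ∀ v, l v = l (Y v) + S v * l P + T v * l Q := fun v => by
    rw [hY, map_sub, map_sub, map_smul, map_smul, real_smul, real_smul]
    ring
  let z : (Fin m → ℝ) →L[ℝ] ℂ := ofRealCLM.comp S + I • ofRealCLM.comp T
  let z' : (Fin m → ℝ) →L[ℝ] ℂ := ofRealCLM.comp S - I • ofRealCLM.comp T
  have hz : ∀ v, z v = S v + I * T v := fun v => rfl
  have hz' : ∀ v, z' v = S v - I * T v := fun v => rfl
  let prod : ((Fin m → ℝ) →L[ℝ] ℂ) → ((Fin m → ℝ) →L[ℝ] ℂ) →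
      (Fin m → ℝ) →L[ℝ] (Fin m → ℝ) →L[ℝ] ℂ := fun f g =>
    (ContinuousLinearMap.mul ℝ ℂ).bilinearComp f g
  let y : Fin m → (Fin m → ℝ) →L[ℝ] ℂ := fun j =>
    (ofRealCLM.comp (ContinuousLinearMap.proj (R := ℝ) (φ := fun _ : Fin m => ℝ) j)).comp Y
  have hy : ∀ j v, y j v = (Y v j : ℂ) := fun j v => rfl
  obtain ⟨τ, hτ0, hτ⟩ := exists_forall_le_im_quadratic (K := ‖l‖) hαim
  let B : (Fin m → ℝ) →L[ℝ] (Fin m → ℝ) →L[ℝ] ℂ :=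
    prod ((-(1 / 2) * α) • z + (-(1 / 4) * β) • z' + (-(1 / 2) : ℂ) • l.comp Y) z' +
      prod ((-(1 / 4) * starRingEnd ℂ β) • z) z + ∑ j, prod ((I * τ) • y j) (y j)
  have hB : ∀ v w, B v w = (-(1 / 2) * α * z v + -(1 / 4) * β * z' v + -(1 / 2) * l (Y v)) * z' w +
      -(1 / 4) * starRingEnd ℂ β * z v * z w + ∑ j, I * τ * Y v j * Y w j := fun v w => by
    simp [B, prod, ← hy]
    ring
  refine ⟨B, fun v => ?_, ?_⟩
  · simp only [hB, hz, hz', hYP, hYQ, hSP, hSQ, hTP, hTQ, map_zero, Pi.zero_apply, ofReal_zero,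
      ofReal_one, mul_zero, zero_mul, Finset.sum_const_zero]
    rw [hlY v, hα, hβ]
    ring_nf
    simp only [I_sq, I_pow_three, I_pow_four]
    ring
  · have him : ∀ v, (B v v).im = -α.im / 2 * (S v ^ 2 + T v ^ 2) - (l (Y v) * z' v).im / 2 +
        τ * ∑ j, Y v j ^ 2 := fun v => by
      have h1 : ∑ j, I * τ * Y v j * Y v j = I * ((τ * ∑ j, Y v j ^ 2 : ℝ) : ℂ) := by
        push_cast
        rw [Finset.mul_sum, Finset.mul_sum]
        exact Finset.sum_congr rfl fun j _ => by ring
      rw [hB, h1, hz, hz']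
      generalize τ * ∑ j, Y v j ^ 2 = r
      simp
      ring
    set a := -α.im / 2 with ha
    set D : ℝ := 6 * ‖P‖ ^ 2 / a + 6 * ‖Q‖ ^ 2 / a + 3 with hD
    have hD0 : 0 < D := by positivity
    refine ⟨D⁻¹, by positivity, fun v => ?_⟩
    have hYs : ‖Y v‖ ^ 2 ≤ ∑ j, Y v j ^ 2 := by
      have h0 : (0 : ℝ) ≤ ∑ j, Y v j ^ 2 := Finset.sum_nonneg fun j _ => sq_nonneg _
      rw [← Real.sq_sqrt h0]
      gcongr
      refine (pi_norm_le_iff_of_nonneg (Real.sqrt_nonneg _)).2 fun j => ?_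
      exact Real.abs_le_sqrt
        (Finset.single_le_sum (f := fun j => Y v j ^ 2) (fun j _ => sq_nonneg _)
          (Finset.mem_univ j))
    have hN : |(l (Y v) * z' v).im| ≤ ‖l‖ * ‖Y v‖ * (|S v| + |T v|) := by
      refine (abs_im_le_norm _).trans ?_
      rw [norm_mul]
      refine mul_le_mul (l.le_opNorm _) ?_ (norm_nonneg _) (by positivity)
      rw [hz']
      refine (norm_sub_le _ _).trans ?_
      simp
    have h1 := hτ _ _ _ _ hN
    have h2 : ‖v‖ ≤ |S v| * ‖P‖ + |T v| * ‖Q‖ + ‖Y v‖ := by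
      have h3 : v = S v • P + T v • Q + Y v := by
        rw [hY]
        abel
      calc ‖v‖ = ‖S v • P + T v • Q + Y v‖ := by rw [← h3]
        _ ≤ ‖S v • P‖ + ‖T v • Q‖ + ‖Y v‖ := norm_add₃_le
        _ = _ := by rw [norm_smul, norm_smul, Real.norm_eq_abs, Real.norm_eq_abs]
    have h3 : ‖v‖ ^ 2 ≤ D * (a / 2 * (S v ^ 2 + T v ^ 2) + ‖Y v‖ ^ 2) := by
      have h4 : ‖v‖ ^ 2 ≤ 3 * (S v ^ 2 * ‖P‖ ^ 2 + T v ^ 2 * ‖Q‖ ^ 2 + ‖Y v‖ ^ 2) := by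
        have h5 : ‖v‖ ^ 2 ≤ (|S v| * ‖P‖ + |T v| * ‖Q‖ + ‖Y v‖) ^ 2 := by gcongr
        rw [← sq_abs (S v), ← sq_abs (T v)]
        nlinarith [sq_nonneg (|S v| * ‖P‖ - |T v| * ‖Q‖), sq_nonneg (|S v| * ‖P‖ - ‖Y v‖),
          sq_nonneg (|T v| * ‖Q‖ - ‖Y v‖)]
      refine h4.trans ?_
      have h5 : D * (a / 2 * (S v ^ 2 + T v ^ 2) + ‖Y v‖ ^ 2) =
          3 * (S v ^ 2 * ‖P‖ ^ 2 + T v ^ 2 * ‖Q‖ ^ 2 + ‖Y v‖ ^ 2) +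
          (3 * (S v ^ 2 * ‖Q‖ ^ 2 + T v ^ 2 * ‖P‖ ^ 2) + 3 * a / 2 * (S v ^ 2 + T v ^ 2) +
            (6 * ‖P‖ ^ 2 / a + 6 * ‖Q‖ ^ 2 / a) * ‖Y v‖ ^ 2) := by
        rw [hD]
        field_simp
        ring
      rw [h5]
      have : 0 ≤ 3 * (S v ^ 2 * ‖Q‖ ^ 2 + T v ^ 2 * ‖P‖ ^ 2) + 3 * a / 2 * (S v ^ 2 + T v ^ 2) +
            (6 * ‖P‖ ^ 2 / a + 6 * ‖Q‖ ^ 2 / a) * ‖Y v‖ ^ 2 := by positivity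
      linarith
    rw [inv_mul_le_iff₀ hD0]
    refine h3.trans (mul_le_mul_of_nonneg_left ?_ hD0.le)
    rw [him]
    have := mul_le_mul_of_nonneg_left hYs hτ0
    linarith

end Jets

section Main

variable {m : ℕ}

lemma hasCriticalPerturbation_of_im_neg {a : (Fin m → ℝ) → Fin m → ℂ} (ha : ContDiff ℝ ∞ a)
    {p P Q : Fin m → ℝ} (hP : ∀ i, (a p i).re = P i) (hQ : ∀ i, (a p i).im = Q i)
    {i₀ i₂ : Fin m} (hi : i₂ ≠ i₀) (ha0 : a p i₀ ≠ 0) {S T f : (Fin m → ℝ) →L[ℝ] ℝ}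
    (hSP : S P = 1) (hSQ : S Q = 0) (hTP : T P = 0) (hTQ : T Q = 1) (hfP : f P = 0)
    (hfQ : f Q = 0) (hfi : f (Pi.single i₂ 1) ≠ 0)
    (hl : (fderiv ℝ (applyField a fun y => (f (y - p) : ℂ)) p P -
      I * fderiv ℝ (applyField a fun y => (f (y - p) : ℂ)) p Q).im < 0) (h : ℕ) :
    HasCriticalPerturbation h p a := by
  obtain ⟨B, hB, κ, hκ, hBκ⟩ := exists_bilinear_im_pos hSP hSQ hTP hTQ hl
  let g : (Fin m → ℝ) →L[ℝ] ℂ := ofRealCLM.comp f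
  obtain ⟨h1, h2⟩ := applyField_jet ha hP hQ g B (by simp [g, hfP, hfQ]) hB
  have hsub : ContDiff ℝ ∞ fun y : Fin m → ℝ => y - p := contDiff_id.sub contDiff_const
  have hBs : ContDiff ℝ ∞ fun y => B (y - p) (y - p) := (B.contDiff.comp hsub).clm_apply hsub
  refine hasCriticalPerturbation_of_jet ha hi ha0 ((g.contDiff.comp hsub).add hBs) ?_ h1 h2 ?_ hκ
    (fun x => ?_) h
  · simp
  · have h3 : HasFDerivAt (fun y => B (y - p) (y - p)) (0 : (Fin m → ℝ) →L[ℝ] ℂ) p := by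
      have h4 : HasFDerivAt (fun y : Fin m → ℝ => y - p) (ContinuousLinearMap.id ℝ _) p :=
        (hasFDerivAt_id p).sub_const p
      refine (B.hasFDerivAt_of_bilinear h4 h4).congr_fderiv ?_
      ext v
      simp
    have h4 : HasFDerivAt (fun y => g (y - p)) g p :=
      g.hasFDerivAt.comp p ((hasFDerivAt_id p).sub_const p)
    have h5 : fderiv ℝ (fun y => g (y - p) + B (y - p) (y - p)) p = g := by
      rw [(h4.fun_add h3).fderiv, add_zero]
    show (fderiv ℝ (fun y => g (y - p) + B (y - p) (y - p)) p (Pi.single i₂ 1)).re ≠ 0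
    rw [h5]
    exact hfi
  · show _ ≤ (g (x - p) + B (x - p) (x - p)).im
    rw [add_im]
    have h3 : (g (x - p)).im = 0 := ofReal_im _
    rw [h3, zero_add]
    exact hBκ _

lemma hasCriticalPerturbation_of_im_ne {a : (Fin m → ℝ) → Fin m → ℂ} (ha : ContDiff ℝ ∞ a)
    {p P Q : Fin m → ℝ} (hP : ∀ i, (a p i).re = P i) (hQ : ∀ i, (a p i).im = Q i)
    {i₀ i₂ : Fin m} (hi : i₂ ≠ i₀) (ha0 : a p i₀ ≠ 0) {S T f : (Fin m → ℝ) →L[ℝ] ℝ}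
    (hSP : S P = 1) (hSQ : S Q = 0) (hTP : T P = 0) (hTQ : T Q = 1) (hfP : f P = 0)
    (hfQ : f Q = 0) (hfi : f (Pi.single i₂ 1) ≠ 0)
    (hl : (fderiv ℝ (applyField a fun y => (f (y - p) : ℂ)) p P -
      I * fderiv ℝ (applyField a fun y => (f (y - p) : ℂ)) p Q).im ≠ 0) (h : ℕ) :
    HasCriticalPerturbation h p a := by
  rcases lt_or_gt_of_ne hl with hneg | hpos
  · exact hasCriticalPerturbation_of_im_neg ha hP hQ hi ha0 hSP hSQ hTP hTQ hfP hfQ hfi hneg h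
  · refine hasCriticalPerturbation_of_im_neg (f := -f) ha hP hQ hi ha0 hSP hSQ hTP hTQ
      (by simp [hfP]) (by simp [hfQ]) (by simpa using hfi) ?_ h
    have h1 : (applyField a fun y => (((-f) (y - p) : ℝ) : ℂ)) =
        -applyField a fun y => (f (y - p) : ℂ) := by
      funext x
      have h2 := applyField_clm a (ofRealCLM.comp f) p x
      have h3 := applyField_clm a (ofRealCLM.comp (-f)) p x
      refine h3.trans ((neg_eq_iff_eq_neg.2 ?_).symm)
      refine h2.trans ?_
      rw [← Finset.sum_neg_distrib]
      exact Finset.sum_congr rfl fun i _ => by simp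
    rw [h1, fderiv_neg]
    simp only [neg_apply, sub_im, mul_neg, neg_im] at hpos ⊢
    linarith

/-- The bump function used to localize perturbations around `p`. -/
noncomputable def unitBump (p : Fin m → ℝ) : ContDiffBump p := ⟨1, 2, one_pos, one_lt_two⟩

lemma hasCriticalPerturbation_of_det_ne {a : (Fin m → ℝ) → Fin m → ℂ} (ha : ContDiff ℝ ∞ a)
    {p : Fin m → ℝ} {i₀ i₁ i₂ : Fin m} (h₀₂ : i₂ ≠ i₀) (h₁₂ : i₂ ≠ i₁)
    (hdet : (a p i₀).re * (a p i₁).im - (a p i₁).re * (a p i₀).im ≠ 0) (h : ℕ) :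
    HasCriticalPerturbation h p a := by
  set P : Fin m → ℝ := fun i => (a p i).re with hP
  set Q : Fin m → ℝ := fun i => (a p i).im with hQ
  let x : Fin m → (Fin m → ℝ) →L[ℝ] ℝ := fun i =>
    ContinuousLinearMap.proj (R := ℝ) (φ := fun _ : Fin m => ℝ) i
  set d : ℝ := P i₀ * Q i₁ - P i₁ * Q i₀ with hd
  have hd0 : d ≠ 0 := hdet
  let S : (Fin m → ℝ) →L[ℝ] ℝ := d⁻¹ • (Q i₁ • x i₀ - Q i₀ • x i₁)
  let T : (Fin m → ℝ) →L[ℝ] ℝ := d⁻¹ • (P i₀ • x i₁ - P i₁ • x i₀)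
  have hS : ∀ v, S v = d⁻¹ * (Q i₁ * v i₀ - Q i₀ * v i₁) := fun v => rfl
  have hT : ∀ v, T v = d⁻¹ * (P i₀ * v i₁ - P i₁ * v i₀) := fun v => rfl
  have hSP : S P = 1 := by rw [hS, inv_mul_eq_one₀ hd0, hd]; ring
  have hSQ : S Q = 0 := by rw [hS]; ring
  have hTP : T P = 0 := by rw [hT]; ring
  have hTQ : T Q = 1 := by rw [hT, inv_mul_eq_one₀ hd0, hd]
  let f : (Fin m → ℝ) →L[ℝ] ℝ := x i₂ - P i₂ • S - Q i₂ • T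
  have hf : ∀ v, f v = v i₂ - P i₂ * S v - Q i₂ * T v := fun v => rfl
  have hfP : f P = 0 := by rw [hf, hSP, hTP]; ring
  have hfQ : f Q = 0 := by rw [hf, hSQ, hTQ]; ring
  have hfi : f (Pi.single i₂ 1) = 1 := by
    rw [hf, hS, hT]
    simp [h₀₂.symm, h₁₂.symm]
  have ha0 : a p i₀ ≠ 0 := fun h0 => hd0 (by simp [hd, hP, hQ, h0])
  refine HasCriticalPerturbation.of_isSmall fun ε hε => ?_
  let χ := unitBump p
  have hsub : ContDiff ℝ ∞ fun y : Fin m → ℝ => y - p := contDiff_id.sub contDiff_const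
  let G : (Fin m → ℝ) → Fin m → ℂ := fun y => χ y • Pi.single i₂ (I * (S (y - p) : ℂ))
  have hG : ContDiff ℝ ∞ G := by
    refine χ.contDiff.smul ?_
    have h1 : ContDiff ℝ ∞ fun y : Fin m → ℝ => I * (S (y - p) : ℂ) :=
      contDiff_const.mul (ofRealCLM.contDiff.comp (S.contDiff.comp hsub))
    refine contDiff_pi.2 fun i => ?_
    by_cases h' : i = i₂
    · subst h'
      simpa using h1
    · simpa [h'] using contDiff_const
  have hGs : HasCompactSupport G := χ.hasCompactSupport.smul_right
  set l := fderiv ℝ (applyField a fun y => (f (y - p) : ℂ)) p with hl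
  obtain ⟨η, hη, hηs⟩ := exists_isSmall_smul_ne hG hGs h hε (((l P - I * l Q).im : ℝ) : ℂ)
    one_ne_zero
  refine ⟨_, hηs, ?_⟩
  have hGp : G p = 0 := by
    simp [G]
  have hap : ∀ i, (a + fun y => η • G y) p i = a p i := fun i => by simp [hGp]
  have hl' : fderiv ℝ (applyField (a + fun y => η • G y) fun y => (f (y - p) : ℂ)) p =
      l + (η * I) • ofRealCLM.comp S := by
    have hfs : ContDiff ℝ ∞ fun y => (f (y - p) : ℂ) :=
      ofRealCLM.contDiff.comp (f.contDiff.comp hsub)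
    have h1 : HasFDerivAt (applyField a fun y => (f (y - p) : ℂ)) l p :=
      ((ha.applyField hfs (k := ∞) (by norm_num)).differentiable (by norm_num) p).hasFDerivAt
    have h2 : HasFDerivAt (fun y : Fin m → ℝ => (η * I) * (S (y - p) : ℂ))
        ((η * I) • ofRealCLM.comp S) p :=
      ((ofRealCLM.comp S).hasFDerivAt.comp p ((hasFDerivAt_id p).sub_const p)).const_mul _
    have h3 : (applyField (a + fun y => η • G y) fun y => (f (y - p) : ℂ)) =ᶠ[𝓝 p] fun y =>
        applyField a (fun y => (f (y - p) : ℂ)) y + (η * I) * (S (y - p) : ℂ) := by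
      filter_upwards [χ.eventuallyEq_one] with y hy
      have h4 := applyField_clm (a + fun y => η • G y) (ofRealCLM.comp f) p y
      have h5 := applyField_clm a (ofRealCLM.comp f) p y
      refine h4.trans ?_
      rw [show applyField a (fun y => (f (y - p) : ℂ)) y = _ from h5]
      simp only [Pi.add_apply, add_mul, Finset.sum_add_distrib]
      congr 1
      rw [Finset.sum_eq_single i₂ (fun i _ hne => by simp [G, hne]) (by simp)]
      simp [G, hy, hfi, mul_assoc]
    rw [h3.fderiv_eq, (h1.fun_add h2).fderiv]
  refine hasCriticalPerturbation_of_im_ne (a := a + fun y => η • G y) (f := f) (S := S)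
    (T := T) (P := P) (Q := Q) (ha.add hηs.1) (fun i => congrArg re (hap i))
    (fun i => congrArg im (hap i)) h₀₂ (by rwa [hap]) hSP hSQ hTP hTQ hfP hfQ
    (by rw [hfi]; exact one_ne_zero) ?_ h
  rw [hl']
  have h1 : (l + ((η : ℂ) * I) • ofRealCLM.comp S) P = l P + η * I := by
    simp [hSP]
  have h2 : (l + ((η : ℂ) * I) • ofRealCLM.comp S) Q = l Q := by
    simp [hSQ]
  rw [h1, h2]
  have h3 : (l P + η * I - I * l Q).im = (l P - I * l Q).im + η := by
    simp
    ring
  rw [h3]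
  exact_mod_cast (by simpa using hη : (((l P - I * l Q).im : ℝ) : ℂ) + η ≠ 0)

theorem hasCriticalPerturbation {a : (Fin m → ℝ) → Fin m → ℂ} (hm : 3 ≤ m) (ha : ContDiff ℝ ∞ a)
    (p : Fin m → ℝ) (h : ℕ) : HasCriticalPerturbation h p a := by
  let i₀ : Fin m := ⟨0, by omega⟩
  let i₁ : Fin m := ⟨1, by omega⟩
  let i₂ : Fin m := ⟨2, by omega⟩
  have h₀₁ : i₁ ≠ i₀ := by simp [i₀, i₁]
  have hsmul : ∀ v : Fin m → ℂ, ContDiff ℝ ∞ (fun y => unitBump p y • v) ∧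
      HasCompactSupport (fun y => unitBump p y • v) ∧ unitBump p p • v = v := fun v =>
    ⟨(unitBump p).contDiff.smul contDiff_const, (unitBump p).hasCompactSupport.smul_right, by
      rw [(unitBump p).eventuallyEq_one.self_of_nhds, Pi.one_apply, one_smul]⟩
  refine HasCriticalPerturbation.of_isSmall fun ε hε => ?_
  obtain ⟨hv, hvs, hvp⟩ := hsmul (Pi.single i₀ 1)
  obtain ⟨η, hη, hηs⟩ := exists_isSmall_smul_ne hv hvs h hε (a p i₀) one_ne_zero
  refine ⟨_, hηs, HasCriticalPerturbation.of_isSmall fun ε' hε' => ?_⟩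
  set b := a + fun y => η • unitBump p y • (Pi.single i₀ (1 : ℂ) : Fin m → ℂ) with hb
  have hb0 : b p i₀ ≠ 0 := by
    simpa [hb, hvp] using hη
  obtain ⟨hv', hvs', hvp'⟩ := hsmul (Pi.single i₁ (I * b p i₀))
  obtain ⟨t, ht, hts⟩ := exists_isSmall_smul_ne hv' hvs' h hε'
    (((b p i₀).re * (b p i₁).im - (b p i₁).re * (b p i₀).im : ℝ) : ℂ)
    (B := ((normSq (b p i₀) : ℝ) : ℂ)) (by exact_mod_cast (normSq_pos.2 hb0).ne')
  refine ⟨_, hts, hasCriticalPerturbation_of_det_ne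
    (a := b + fun y => t • unitBump p y • (Pi.single i₁ (I * b p i₀) : Fin m → ℂ))
    (i₀ := i₀) (i₁ := i₁) (i₂ := i₂) ((ha.add hηs.1).add hts.1) (by simp [i₀, i₂])
    (by simp [i₁, i₂]) ?_ h⟩
  have h1 : (b + fun y => t • unitBump p y • (Pi.single i₁ (I * b p i₀) : Fin m → ℂ)) p i₀ =
      b p i₀ := by
    simp [hvp', h₀₁.symm]
  have h2 : (b + fun y => t • unitBump p y • (Pi.single i₁ (I * b p i₀) : Fin m → ℂ)) p i₁ =
      b p i₁ + t * (I * b p i₀) := by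
    rw [Pi.add_apply, Pi.add_apply, hvp']
    simp
  rw [h1, h2]
  have h3 : (b p i₀).re * (b p i₁ + t * (I * b p i₀)).im -
      (b p i₁ + t * (I * b p i₀)).re * (b p i₀).im =
      (b p i₀).re * (b p i₁).im - (b p i₁).re * (b p i₀).im + t * normSq (b p i₀) := by
    rw [normSq_apply]
    simp
    ring
  rw [h3]
  exact_mod_cast ht

lemma exists_contDiff_eventuallyEq {u : (Fin m → ℝ) → ℂ} {U : Set (Fin m → ℝ)} (hU : IsOpen U)
    {p : Fin m → ℝ} (hp : p ∈ U) (hu : ContDiffOn ℝ 1 u U) :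
    ∃ v : (Fin m → ℝ) → ℂ, ContDiff ℝ 1 v ∧ v =ᶠ[𝓝 p] u := by
  obtain ⟨r, hr, hball⟩ := Metric.isOpen_iff.1 hU p hp
  let χ : ContDiffBump p := ⟨r / 4, r / 2, by positivity, by linarith⟩
  refine ⟨fun x => (χ x : ℂ) * u x, contDiff_iff_contDiffAt.2 fun x => ?_, ?_⟩
  · by_cases hx : x ∈ tsupport χ
    · rw [χ.tsupport_eq] at hx
      have hxU : x ∈ U := hball (Metric.closedBall_subset_ball (half_lt_self hr) hx)
      exact (ofRealCLM.contDiff.comp χ.contDiff).contDiffAt.mul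
        (hu.contDiffAt (hU.mem_nhds hxU))
    · refine (contDiffAt_const (c := (0 : ℂ))).congr_of_eventuallyEq ?_
      filter_upwards [notMem_tsupport_iff_eventuallyEq.1 hx] with y hy
      simp [hy]
  · filter_upwards [χ.eventuallyEq_one] with x h1
    simp [h1]

end Main

/-- Nirenberg-type perturbation lemma (Lemma 1.2 of the paper, on `M = ℝ^m`, `m ≥ 3`):
given a smooth complex vector field `L₀` with coefficients `a⁰ : ℝ^m → ℂ^m`, a point `p₀`,
`h ∈ ℕ` and `ε > 0`, there is a smooth complex vector field with coefficients `a`, at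
`C^h`-distance less than `ε` from `a⁰`, such that every `C¹` solution `u` of `Lu = 0` on an
open neighborhood of `p₀` has `du(p₀) = 0`. -/
theorem statement0 (m : ℕ) (hm : 3 ≤ m)
    (a0 : (Fin m → ℝ) → (Fin m → ℂ)) (ha0 : ContDiff ℝ (⊤ : ℕ∞) a0)
    (p₀ : Fin m → ℝ) (h : ℕ) (ε : ℝ) (hε : 0 < ε) :
    ∃ a : (Fin m → ℝ) → (Fin m → ℂ), ContDiff ℝ (⊤ : ℕ∞) a ∧
      (∀ x : Fin m → ℝ, ∀ j : ℕ, j ≤ h → ‖iteratedFDeriv ℝ j (a - a0) x‖ < ε) ∧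
      (∀ U : Set (Fin m → ℝ), IsOpen U → p₀ ∈ U →
        ∀ u : (Fin m → ℝ) → ℂ, ContDiffOn ℝ 1 u U →
          (∀ x ∈ U, ∑ i : Fin m, a x i * fderiv ℝ u x (Pi.single i (1 : ℝ)) = 0) →
          fderiv ℝ u p₀ = 0) := by
  obtain ⟨V, hV, hu⟩ := hasCriticalPerturbation hm ha0 p₀ h ε hε
  refine ⟨a0 + V, ha0.add hV.1, fun x j hj => ?_, fun U hU hp u hu1 hsol => ?_⟩
  · rw [add_sub_cancel_left]
    exact hV.2 x j hj
  · obtain ⟨v, hv, hvu⟩ := exists_contDiff_eventuallyEq hU hp hu1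
    rw [← hvu.fderiv_eq]
    refine hu v hv ?_
    filter_upwards [hvu.eventuallyEq_nhds, hU.mem_nhds hp] with x hx hxU
    rw [applyField_congr hx]
    exact hsol x hxU
end

section
/- Let ψ : ℂ → ℂ be a C^∞ function with compact support. Then the following are equivalent: (a) there exists a C^∞ function v : ℂ → ℂ with compact support such that for every z ∈ ℂ, ½·((fderiv ℝ v z)(1) + i·(fderiv ℝ v z)(i)) = ψ(z) (i.e., ∂v/∂z̄ = ψ); (b) for every natural number h, ∫_ℂ z^h · ψ(z) dλ(z) = 0, where λ is Lebesgue measure on ℂ ≅ ℝ². -/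
open Complex MeasureTheory

open scoped Convolution Real

open Set Filter Topology

/-- Integrating `∂/∂z̄` of a compactly supported function against a holomorphic function gives
zero. -/
theorem integral_mul_dbar_eq_zero {f v : ℂ → ℂ} (hf : Differentiable ℂ f)
    (hv : ContDiff ℝ 1 v) (hvs : HasCompactSupport v) :
    ∫ z : ℂ, f z * (fderiv ℝ v z 1 + I * fderiv ℝ v z I) = 0 := by
  have hfc : ContDiff ℝ 1 f := (hf.contDiff (n := 1)).restrict_scalars ℝ
  have hfd : ∀ z w, fderiv ℝ f z w = deriv f z * w := fun z w => by
    rw [((hf z).hasDerivAt.hasFDerivAt.restrictScalars ℝ).fderiv]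
    simp [mul_comm]
  have hcv : ∀ w, Continuous fun z => fderiv ℝ v z w := fun w =>
    (hv.continuous_fderiv one_ne_zero).clm_apply continuous_const
  have hcf : ∀ w, Continuous fun z => fderiv ℝ f z w := fun w =>
    (hfc.continuous_fderiv one_ne_zero).clm_apply continuous_const
  have hint : ∀ w, Integrable fun z => f z * fderiv ℝ v z w := fun w =>
    (hfc.continuous.mul (hcv w)).integrable_of_hasCompactSupport
      (hvs.fderiv_apply (𝕜 := ℝ) w).mul_left
  have hint' : ∀ w, Integrable fun z => fderiv ℝ f z w * v z := fun w =>
    ((hcf w).mul hv.continuous).integrable_of_hasCompactSupport hvs.mul_left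
  have key : ∀ w, ∫ z, f z * fderiv ℝ v z w = - ∫ z, fderiv ℝ f z w * v z := fun w =>
    integral_mul_fderiv_eq_neg_fderiv_mul_of_integrable (hint' w) (hint w)
      ((hfc.continuous.mul hv.continuous).integrable_of_hasCompactSupport hvs.mul_left)
      (fun z _ => hfc.differentiable one_ne_zero z) (fun z _ => hv.differentiable one_ne_zero z)
  have hsplit : ∀ z, f z * (fderiv ℝ v z 1 + I * fderiv ℝ v z I) =
      f z * fderiv ℝ v z 1 + I * (f z * fderiv ℝ v z I) := fun z => by ring
  simp_rw [hsplit]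
  rw [integral_add (hint 1) ((hint I).const_mul I), integral_const_mul, key, key]
  simp_rw [hfd]
  have : ∀ z, deriv f z * I * v z = I * (deriv f z * 1 * v z) := fun z => by ring
  simp_rw [this]
  rw [integral_const_mul]
  linear_combination (-∫ z, deriv f z * 1 * v z) * I_mul_I

theorem locallyIntegrable_complex_inv : LocallyIntegrable fun z : ℂ => z⁻¹ := by
  refine locallyIntegrable_of_norm_le_rpow (C := 1) (α := 1) (by simp) (by simp)
    (ae_of_all _ fun z => ?_) measurable_inv.aestronglyMeasurable
  simp [Real.rpow_neg_one]

theorem integrableOn_polarCoord_target {g : ℝ × ℝ → ℂ} (hg : Continuous g) {R : ℝ}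
    (hR : ∀ p : ℝ × ℝ, R < p.1 → g p = 0) :
    IntegrableOn g (Ioi 0 ×ˢ Ioo (-π) π) := by
  have hK : IntegrableOn g (Icc 0 R ×ˢ Icc (-π) π) :=
    hg.continuousOn.integrableOn_compact (isCompact_Icc.prod isCompact_Icc)
  refine hK.of_forall_sdiff_eq_zero (measurableSet_Ioi.prod measurableSet_Ioo) fun p hp => ?_
  refine hR p (not_le.1 fun h => hp.2 ?_)
  exact ⟨⟨(mem_Ioi.1 hp.1.1).le, h⟩, Ioo_subset_Icc_self hp.1.2⟩

theorem hasDerivAt_cos_add_sin_mul_I (θ : ℝ) :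
    HasDerivAt (fun θ : ℝ => (Real.cos θ : ℂ) + Real.sin θ * I)
      ((Real.cos θ + Real.sin θ * I) * I) θ := by
  have h := (Real.hasDerivAt_cos θ).ofReal_comp.add
    ((Real.hasDerivAt_sin θ).ofReal_comp.mul_const I)
  refine h.congr_deriv ?_
  push_cast
  linear_combination -(Complex.sin θ) * I_mul_I

/-- The Cauchy–Pompeiu formula for compactly supported functions on the plane. -/
theorem integral_inv_mul_dbar {u : ℂ → ℂ} (hu : ContDiff ℝ 1 u) (hus : HasCompactSupport u) :
    ∫ w : ℂ, w⁻¹ * (fderiv ℝ u w 1 + I * fderiv ℝ u w I) = -(2 * π) * u 0 := by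
  obtain ⟨R, hR0, hR⟩ := hus.isCompact.isBounded.exists_pos_norm_lt
  have hzero : ∀ w : ℂ, R ≤ ‖w‖ → u w = 0 := fun w hw =>
    image_eq_zero_of_notMem_tsupport fun h => (hR w h).not_ge hw
  have hdzero : ∀ w : ℂ, R ≤ ‖w‖ → fderiv ℝ u w = 0 := fun w hw =>
    image_eq_zero_of_notMem_tsupport fun h =>
      (hR w (tsupport_fderiv_subset ℝ h)).not_ge hw
  set E : ℝ → ℂ := fun θ => Real.cos θ + Real.sin θ * I with hE
  have hEc : Continuous E := by fun_prop
  have hEn : ∀ θ, ‖E θ‖ = 1 := fun θ => by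
    simp [hE, norm_cos_add_sin_mul_I]
  have hud : ∀ w, HasFDerivAt u (fderiv ℝ u w) w := fun w =>
    (hu.differentiable one_ne_zero w).hasFDerivAt
  set A : ℝ × ℝ → ℂ := fun p => fderiv ℝ u (p.1 * E p.2) (E p.2) with hA
  set B : ℝ × ℝ → ℂ := fun p => fderiv ℝ u (p.1 * E p.2) (E p.2 * I) with hB
  have hdc : Continuous fun p : ℝ × ℝ => fderiv ℝ u (p.1 * E p.2) :=
    (hu.continuous_fderiv one_ne_zero).comp (by fun_prop)
  have hAc : Continuous A := hdc.clm_apply (by fun_prop)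
  have hBc : Continuous B := hdc.clm_apply (by fun_prop)
  have hd0 : ∀ p : ℝ × ℝ, R < p.1 → fderiv ℝ u (p.1 * E p.2) = 0 := fun p hp =>
    hdzero _ (by simpa [hEn] using hp.le.trans (le_abs_self _))
  have hAi : IntegrableOn A (Ioi 0 ×ˢ Ioo (-π) π) :=
    integrableOn_polarCoord_target hAc (R := R) fun p hp => by simp [hA, hd0 p hp]
  have hBi : IntegrableOn B (Ioi 0 ×ˢ Ioo (-π) π) :=
    integrableOn_polarCoord_target hBc (R := R) fun p hp => by simp [hB, hd0 p hp]
  have hAint : ∫ p in Ioi 0 ×ˢ Ioo (-π) π, A p = -(2 * π) * u 0 := by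
    have hin : ∀ θ : ℝ, ∫ r in Ioi (0 : ℝ), A (r, θ) = -u 0 := fun θ => by
      have hf : ContDiff ℝ 1 fun r : ℝ => u (r * E θ) :=
        hu.comp (ofRealCLM.contDiff.mul contDiff_const)
      have hfs : HasCompactSupport fun r : ℝ => u (r * E θ) :=
        HasCompactSupport.intro (isCompact_closedBall (0 : ℝ) R) fun r hr =>
          hzero _ (by simpa [hEn] using (not_le.1 (by simpa using hr)).le)
      have hder : ∀ r : ℝ, deriv (fun r : ℝ => u (r * E θ)) r = A (r, θ) := fun r => by
        have h1 : HasDerivAt (fun r : ℝ => (r : ℂ) * E θ) (E θ) r := by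
          simpa using (hasDerivAt_id r).ofReal_comp.mul_const (E θ)
        exact ((hud _).comp_hasDerivAt r h1).deriv
      simp_rw [← hder]
      rw [hfs.integral_Ioi_deriv_eq hf]
      simp
    have hAi' : Integrable A ((volume.restrict (Ioi (0 : ℝ))).prod
        (volume.restrict (Ioo (-π) π))) := by
      rwa [Measure.prod_restrict]
    rw [Measure.volume_eq_prod, ← Measure.prod_restrict, integral_prod_symm _ hAi']
    simp_rw [hin]
    rw [setIntegral_const, Measure.real, Real.volume_Ioo,
      ENNReal.toReal_ofReal (by linarith [Real.pi_pos]), real_smul]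
    push_cast
    ring
  have hBint : ∫ p in Ioi 0 ×ˢ Ioo (-π) π, B p = 0 := by
    rw [Measure.volume_eq_prod, setIntegral_prod _ hBi]
    refine setIntegral_eq_zero_of_forall_eq_zero fun r hr => ?_
    have hr0 : (r : ℂ) ≠ 0 := ofReal_ne_zero.2 (ne_of_gt hr)
    have hder : ∀ θ : ℝ, HasDerivAt (fun θ : ℝ => u (r * E θ)) (r * B (r, θ)) θ := fun θ => by
      have h1 := (hud (r * E θ)).comp_hasDerivAt θ
        ((hasDerivAt_cos_add_sin_mul_I θ).const_mul (r : ℂ))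
      refine h1.congr_deriv ?_
      have h2 : (r : ℂ) * ((Real.cos θ + Real.sin θ * I) * I) = r • (E θ * I) := by
        rw [real_smul]
      rw [h2, map_smul, real_smul]
    have hc : Continuous fun θ : ℝ => (r : ℂ) * B (r, θ) := by fun_prop
    have h3 := intervalIntegral.integral_eq_sub_of_hasDerivAt (a := -π) (b := π)
      (fun θ _ => hder θ) (hc.intervalIntegrable _ _)
    rw [intervalIntegral.integral_const_mul, intervalIntegral.integral_of_le
      (by linarith [Real.pi_pos]), integral_Ioc_eq_integral_Ioo] at h3
    simpa [hE, hr0] using h3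
  rw [← Complex.integral_comp_polarCoord_symm]
  have hcongr : ∀ p ∈ polarCoord.target,
      p.1 • ((Complex.polarCoord.symm p)⁻¹ * (fderiv ℝ u (Complex.polarCoord.symm p) 1 +
        I * fderiv ℝ u (Complex.polarCoord.symm p) I)) = A p + I * B p := fun p hp => by
    have hp0 : (p.1 : ℂ) ≠ 0 := ofReal_ne_zero.2 (ne_of_gt hp.1)
    have hlin : ∀ (L : ℂ →L[ℝ] ℂ) (w : ℂ), L w = w.re * L 1 + w.im * L I := fun L w => by
      conv_lhs => rw [show w = w.re • (1 : ℂ) + w.im • I by simp]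
      rw [map_add, map_smul, map_smul, real_smul, real_smul]
    rw [Complex.polarCoord_symm_apply, real_smul]
    simp only [hA, hB]
    change (p.1 : ℂ) * ((p.1 * E p.2)⁻¹ * (fderiv ℝ u (p.1 * E p.2) 1 +
      I * fderiv ℝ u (p.1 * E p.2) I)) = _
    rw [hlin _ (E p.2), hlin _ (E p.2 * I)]
    have hre : (E p.2).re = Real.cos p.2 := by simp [hE, -ofReal_cos, -ofReal_sin]
    have him : (E p.2).im = Real.sin p.2 := by simp [hE, -ofReal_cos, -ofReal_sin]
    have hsq : (Real.cos p.2 : ℂ) ^ 2 + (Real.sin p.2 : ℂ) ^ 2 = 1 := by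
      exact_mod_cast Real.cos_sq_add_sin_sq p.2
    have hinv : (E p.2)⁻¹ = Real.cos p.2 - Real.sin p.2 * I := by
      refine inv_eq_of_mul_eq_one_right ?_
      simp only [hE]
      linear_combination hsq - (Real.sin p.2 : ℂ) ^ 2 * I_mul_I
    rw [mul_inv, mul_assoc, mul_inv_cancel_left₀ hp0, hinv]
    simp only [mul_I_re, mul_I_im, hre, him]
    push_cast
    linear_combination (-(Complex.sin p.2) * fderiv ℝ u (p.1 * E p.2) I) * I_mul_I
  rw [setIntegral_congr_fun polarCoord.open_target.measurableSet hcongr]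
  change ∫ p in Ioi (0 : ℝ) ×ˢ Ioo (-π) π, (A p + I * B p) = _
  rw [integral_add hAi (hBi.const_mul I), integral_const_mul, hAint, hBint]
  simp

/-- If all the moments of `ψ` vanish, so does its Cauchy transform away from the support. -/
theorem integral_inv_sub_mul_eq_zero {ψ : ℂ → ℂ} (hψ : Continuous ψ)
    (hsupp : HasCompactSupport ψ) (hm : ∀ h : ℕ, ∫ z : ℂ, z ^ h * ψ z = 0) {R : ℝ} (hR0 : 0 ≤ R)
    (hR : ∀ w ∈ tsupport ψ, ‖w‖ ≤ R) {z : ℂ} (hz : R < ‖z‖) :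
    ∫ w : ℂ, (z - w)⁻¹ * ψ w = 0 := by
  have hzp : 0 < ‖z‖ := hR0.trans_lt hz
  have hz0 : z ≠ 0 := norm_pos_iff.1 hzp
  have hq0 : 0 ≤ R / ‖z‖ := by positivity
  have hq : R / ‖z‖ < 1 := (div_lt_one hzp).2 hz
  have hsum := hasSum_integral_of_dominated_convergence (μ := (volume : Measure ℂ))
    (F := fun (h : ℕ) w => (z⁻¹) ^ (h + 1) * (w ^ h * ψ w)) (f := fun w => (z - w)⁻¹ * ψ w)
    (fun h w => (R / ‖z‖) ^ h * (‖z‖⁻¹ * ‖ψ w‖))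
    (fun h => (by fun_prop : Continuous _).aestronglyMeasurable)
    (fun h => ae_of_all _ fun w => ?_)
    (ae_of_all _ fun w => (summable_geometric_of_lt_one hq0 hq).mul_right _) ?_
    (ae_of_all _ fun w => ?_)
  · refine hsum.unique ?_
    simp_rw [integral_const_mul, hm, mul_zero]
    exact hasSum_zero
  · by_cases hw : w ∈ tsupport ψ
    · have := hR w hw
      rw [norm_mul, norm_mul, norm_pow, norm_pow, norm_inv, div_pow, pow_succ, div_eq_mul_inv,
        inv_pow]
      calc _ = ‖w‖ ^ h * ((‖z‖ ^ h)⁻¹ * (‖z‖⁻¹ * ‖ψ w‖)) := by ring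
        _ ≤ R ^ h * ((‖z‖ ^ h)⁻¹ * (‖z‖⁻¹ * ‖ψ w‖)) := by gcongr
        _ = _ := by ring
    · simp [image_eq_zero_of_notMem_tsupport hw]
  · simp_rw [tsum_mul_right]
    exact ((hψ.integrable_of_hasCompactSupport hsupp).norm.const_mul _).const_mul _
  · by_cases hw : w ∈ tsupport ψ
    · have hwz : ‖w * z⁻¹‖ < 1 := by
        rw [norm_mul, norm_inv, ← div_eq_mul_inv]
        exact (div_lt_one hzp).2 ((hR w hw).trans_lt hz)
      have hg := ((hasSum_geometric_of_norm_lt_one hwz).mul_right (z⁻¹ * ψ w))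
      convert! hg using 1
      · ext h
        rw [mul_pow]
        ring
      · have : 1 - w * z⁻¹ = (z - w) * z⁻¹ := by field_simp
        rw [this, mul_inv, inv_inv]
        field_simp
    · simp only [image_eq_zero_of_notMem_tsupport hw, mul_zero]
      exact hasSum_zero

/-- The convolution `v = z⁻¹ ⋆ ψ` solves `∂v/∂z̄ = π ψ`. -/
theorem dbar_convolution_inv {ψ : ℂ → ℂ} (hψ : ContDiff ℝ 1 ψ) (hsupp : HasCompactSupport ψ)
    (z : ℂ) :
    fderiv ℝ ((fun w : ℂ => w⁻¹) ⋆[ContinuousLinearMap.mul ℝ ℂ] ψ) z 1 +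
      I * fderiv ℝ ((fun w : ℂ => w⁻¹) ⋆[ContinuousLinearMap.mul ℝ ℂ] ψ) z I =
      2 * π * ψ z := by
  have hdc := hψ.continuous_fderiv one_ne_zero
  have hds := hsupp.fderiv (𝕜 := ℝ)
  have hd : ∀ a : ℂ, fderiv ℝ ((fun w : ℂ => w⁻¹) ⋆[ContinuousLinearMap.mul ℝ ℂ] ψ) z a =
      ∫ w : ℂ, w⁻¹ * fderiv ℝ ψ (z - w) a := fun a => by
    rw [(hsupp.hasFDerivAt_convolution_right _ locallyIntegrable_complex_inv hψ z).fderiv,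
      convolution_precompR_apply _ locallyIntegrable_complex_inv hds hdc]
    rfl
  have hi : ∀ a : ℂ, Integrable fun w : ℂ => w⁻¹ * fderiv ℝ ψ (z - w) a := fun a =>
    (hsupp.fderiv_apply (𝕜 := ℝ) a).convolutionExists_right (ContinuousLinearMap.mul ℝ ℂ)
      locallyIntegrable_complex_inv (hdc.clm_apply continuous_const) z
  have hu : ContDiff ℝ 1 fun w => ψ (z - w) := hψ.comp (contDiff_const.sub contDiff_id)
  have hus : HasCompactSupport fun w => ψ (z - w) :=
    hsupp.comp_homeomorph (Homeomorph.subLeft z)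
  have hfd : ∀ w a, fderiv ℝ (fun w => ψ (z - w)) w a = -fderiv ℝ ψ (z - w) a := fun w a => by
    have h1 := (hψ.differentiable one_ne_zero (z - w)).hasFDerivAt.comp w
      ((hasFDerivAt_id (𝕜 := ℝ) w).const_sub z)
    change fderiv ℝ (ψ ∘ HSub.hSub z) w a = _
    rw [h1.fderiv]
    simp
  have hcp := integral_inv_mul_dbar hu hus
  simp_rw [hfd] at hcp
  rw [hd, hd, ← integral_const_mul, ← integral_add (hi 1) ((hi I).const_mul I)]
  have : ∀ w : ℂ, w⁻¹ * (-fderiv ℝ ψ (z - w) 1 + I * -fderiv ℝ ψ (z - w) I) =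
      -(w⁻¹ * fderiv ℝ ψ (z - w) 1 + I * (w⁻¹ * fderiv ℝ ψ (z - w) I)) := fun w => by ring
  simp_rw [this] at hcp
  rw [integral_neg, sub_zero] at hcp
  linear_combination -hcp

/-- Moment criterion for compactly supported solvability of `∂v/∂z̄ = ψ` in one complex
variable: a smooth compactly supported `ψ : ℂ → ℂ` is `∂/∂z̄` of a smooth compactly supported
function if and only if all the moments `∫ z^h ψ(z) dλ(z)` vanish. -/
theorem statement3 (ψ : ℂ → ℂ) (hψ : ContDiff ℝ (⊤ : ℕ∞) ψ) (hsupp : HasCompactSupport ψ) :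
    (∃ v : ℂ → ℂ, ContDiff ℝ (⊤ : ℕ∞) v ∧ HasCompactSupport v ∧
      ∀ z : ℂ, (1 / 2 : ℂ) * (fderiv ℝ v z 1 + Complex.I * fderiv ℝ v z Complex.I) = ψ z) ↔
    (∀ h : ℕ, ∫ z : ℂ, z ^ h * ψ z = 0) := by
  have one_le : (1 : WithTop ℕ∞) ≤ ((⊤ : ℕ∞) : WithTop ℕ∞) := by exact_mod_cast le_top
  constructor
  · rintro ⟨v, hv, hvs, hvψ⟩ h
    simp_rw [← hvψ, mul_left_comm _ (1 / 2 : ℂ)]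
    rw [integral_const_mul, integral_mul_dbar_eq_zero (f := fun z => z ^ h) (by fun_prop)
      (hv.of_le one_le) hvs, mul_zero]
  · intro hm
    set T : ℂ → ℂ := (fun w : ℂ => w⁻¹) ⋆[ContinuousLinearMap.mul ℝ ℂ] ψ with hT
    have hTc : ContDiff ℝ (⊤ : ℕ∞) T :=
      hsupp.contDiff_convolution_right _ locallyIntegrable_complex_inv hψ
    obtain ⟨R, hR0, hR⟩ := hsupp.isCompact.isBounded.exists_pos_norm_le
    have hTs : HasCompactSupport T :=
      HasCompactSupport.intro (isCompact_closedBall (0 : ℂ) R) fun z hz => by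
        rw [hT, convolution_eq_swap]
        exact integral_inv_sub_mul_eq_zero hψ.continuous hsupp hm hR0.le hR (by simpa using hz)
    refine ⟨fun z => (π : ℂ)⁻¹ * T z, contDiff_const.mul hTc, hTs.mul_left, fun z => ?_⟩
    have hfd : ∀ a, fderiv ℝ (fun z => (π : ℂ)⁻¹ * T z) z a = (π : ℂ)⁻¹ * fderiv ℝ T z a :=
      fun a => by
        rw [fderiv_const_mul (hTc.differentiable (by simp) z)]
        rfl
    have hπ : (π : ℂ) ≠ 0 := ofReal_ne_zero.2 Real.pi_ne_zero
    have key := dbar_convolution_inv (hψ.of_le one_le) hsupp z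
    rw [hfd, hfd, mul_left_comm I, ← mul_add, key]
    field_simp
end
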